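/- arXiv:2005.05238 — 7 statements merged into one kernel-verified Lean document; each statement's English description precedes it below -/
import Mathlib

section
/- Fixed points of the deterministic FedGD algorithm: Let f_1, ..., f_m : R^d -> R be differentiable functions, let s > 0 be a stepsize, and let e >= 1 be an integer. Define gradient maps G_j(x) = x - s*grad f_j(x) and let G_j^e denote the e-fold composition of G_j (with G_j^0 the identity). Suppose the FedGD iterates x_j^{(t+1)} = (1/m) * sum_{k=1}^m G_k^e(x_k^{(t)}) converge as t -> infinity. Then (a) all local sequences x_j^{(t)} converge to a common limit x* in R^d, and (b) this limit satisfies sum_{i=1}^{e} sum_{j=1}^m grad f_j(G_j^{i-1}(x*)) = 0. -/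
open Filter Finset

/-- Fixed points of the deterministic FedGD algorithm (Proposition 1 of Pathak–Wainwright):
if the FedGD iterates `x_j^{(t+1)} = (1/m) ∑_k G_k^e (x_k^{(t)})` converge, then all local
sequences share a common limit `x*`, and this limit satisfies
`∑_{i=1}^{e} ∑_{j=1}^m ∇f_j (G_j^{i-1} x*) = 0`.
(Sequences are indexed so that `x t` is the iterate at round `t`.) -/
theorem fedgd_fixed_points
    {d m : ℕ} (hm : 0 < m)
    (f : Fin m → EuclideanSpace ℝ (Fin d) → ℝ)
    (hdiff : ∀ j, Differentiable ℝ (f j))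
    (hgradcont : ∀ j, Continuous (gradient (f j)))
    (s : ℝ) (hs : 0 < s)
    (e : ℕ) (he : 1 ≤ e)
    (G : Fin m → EuclideanSpace ℝ (Fin d) → EuclideanSpace ℝ (Fin d))
    (hG : ∀ j x, G j x = x - s • gradient (f j) x)
    (x : ℕ → Fin m → EuclideanSpace ℝ (Fin d))
    (hupdate : ∀ t j, x (t + 1) j = (m : ℝ)⁻¹ • ∑ k, (G k)^[e] (x t k))
    (xlim : Fin m → EuclideanSpace ℝ (Fin d))
    (hconv : ∀ j, Tendsto (fun t => x t j) atTop (nhds (xlim j))) :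
    ∃ xstar : EuclideanSpace ℝ (Fin d),
      (∀ j, xlim j = xstar) ∧
      ∑ i ∈ Finset.range e, ∑ j, gradient (f j) ((G j)^[i] xstar) = 0 := by
  have hGc : ∀ j, Continuous (G j) := by
    intro j
    have h : G j = fun y => y - s • gradient (f j) y := funext (hG j)
    rw [h]
    exact continuous_id.sub ((hgradcont j).const_smul s)
  have hm0 : (m : ℝ) ≠ 0 := by exact_mod_cast hm.ne'
  have hlim : ∀ j, xlim j = (m : ℝ)⁻¹ • ∑ k, (G k)^[e] (xlim k) := by
    intro j
    have h1 : Tendsto (fun t => x (t + 1) j) atTop (nhds (xlim j)) :=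
      (hconv j).comp (tendsto_add_atTop_nat 1)
    have h2 : Tendsto (fun t => x (t + 1) j) atTop
        (nhds ((m : ℝ)⁻¹ • ∑ k, (G k)^[e] (xlim k))) := by
      simp only [hupdate]
      refine Tendsto.const_smul ?_ _
      refine tendsto_finsetSum _ fun k _ => ?_
      exact (((hGc k).iterate e).tendsto (xlim k)).comp (hconv k)
    exact tendsto_nhds_unique h1 h2
  refine ⟨(m : ℝ)⁻¹ • ∑ k, (G k)^[e] (xlim k), hlim, ?_⟩
  generalize hy : (m : ℝ)⁻¹ • ∑ k, (G k)^[e] (xlim k) = y at hlim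
  simp only [hlim] at hy
  have hit : ∀ (j : Fin m) (n : ℕ),
      (G j)^[n] y = y - s • ∑ i ∈ Finset.range n, gradient (f j) ((G j)^[i] y) := by
    intro j n
    induction n with
    | zero => simp
    | succ n ih =>
      rw [Function.iterate_succ_apply', hG, Finset.sum_range_succ, smul_add, ← sub_sub, ← ih]
  have h3 : ∑ k, (G k)^[e] y = (m : ℝ) • y := by
    rw [← hy, smul_inv_smul₀ hm0, hy]
  simp only [hit _ e, Finset.sum_sub_distrib, Finset.sum_const, Finset.card_univ,
    Fintype.card_fin, ← Finset.smul_sum] at h3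
  rw [← Nat.cast_smul_eq_nsmul ℝ, sub_eq_self, smul_eq_zero] at h3
  rw [Finset.sum_comm]
  exact h3.resolve_left hs.ne'
end

section
/- Fixed points of the deterministic FedProx algorithm: Let f_1, ..., f_m : R^d -> R be convex differentiable functions and let s > 0. For each j let prox_{s f_j}(z) denote the unique minimizer over x in R^d of f_j(x) + (1/(2s))*||z - x||^2, and let M_{s f_j}(z) = inf_x { f_j(x) + (1/(2s))*||z - x||^2 } denote the Moreau envelope. Suppose the FedProx iterates x_j^{(t+1)} = (1/m) * sum_{k=1}^m prox_{s f_k}(x_k^{(t)}) converge as t -> infinity. Then (a) all local sequences x_j^{(t)} converge to a common limit x* in R^d, and (b) this limit satisfies sum_{j=1}^m grad M_{s f_j}(x*) = 0. -/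
open Filter Finset

lemma prox_strong {E : Type*} [NormedAddCommGroup E] [InnerProductSpace ℝ E]
    (f : E → ℝ) (hf : ConvexOn ℝ Set.univ f) (c : ℝ) (z p : E)
    (hp : ∀ u, f p + c * ‖z - p‖ ^ 2 ≤ f u + c * ‖z - u‖ ^ 2) (u : E) :
    f p + c * ‖z - p‖ ^ 2 + c * ‖u - p‖ ^ 2 ≤ f u + c * ‖z - u‖ ^ 2 := by
  have key : ∀ t : ℝ, 0 < t → t < 1 →
      f p + c * ‖z - p‖ ^ 2 + (1 - t) * (c * ‖u - p‖ ^ 2) ≤ f u + c * ‖z - u‖ ^ 2 := by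
    intro t ht ht1
    have h1 := hp ((1 - t) • p + t • u)
    have h2 := hf.2 (Set.mem_univ p) (Set.mem_univ u) (by linarith : (0 : ℝ) ≤ 1 - t) ht.le
      (by ring)
    simp only [smul_eq_mul] at h2
    have e1 : z - ((1 - t) • p + t • u) = (z - p) - t • (u - p) := by module
    have e2 : z - u = (z - p) - (u - p) := by abel
    rw [e1, norm_sub_sq_real (z - p), norm_smul, inner_smul_right, Real.norm_eq_abs, mul_pow, sq_abs] at h1
    rw [e2, norm_sub_sq_real (z - p) (u - p)]
    have h3 : t * (f p + c * ‖z - p‖ ^ 2 + (1 - t) * (c * ‖u - p‖ ^ 2)) ≤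
        t * (f u + c * (‖z - p‖ ^ 2 - 2 * inner ℝ (z - p) (u - p) + ‖u - p‖ ^ 2)) := by
      nlinarith
    exact le_of_mul_le_mul_left h3 ht
  have hlim : Tendsto (fun t : ℝ => f p + c * ‖z - p‖ ^ 2 + (1 - t) * (c * ‖u - p‖ ^ 2))
      (nhdsWithin 0 (Set.Ioi 0)) (nhds (f p + c * ‖z - p‖ ^ 2 + (1 - 0) * (c * ‖u - p‖ ^ 2))) := by
    apply Tendsto.mono_left _ nhdsWithin_le_nhds
    apply Continuous.tendsto
    fun_prop
  have := le_of_tendsto hlim (by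
    filter_upwards [Ioo_mem_nhdsGT (zero_lt_one : (0 : ℝ) < 1)] with t ht
    exact key t ht.1 ht.2)
  linarith

lemma prox_nonexp {E : Type*} [NormedAddCommGroup E] [InnerProductSpace ℝ E]
    (f : E → ℝ) (hf : ConvexOn ℝ Set.univ f) (c : ℝ) (hc : 0 < c) (P : E → E)
    (hp : ∀ z u, f (P z) + c * ‖z - P z‖ ^ 2 ≤ f u + c * ‖z - u‖ ^ 2) (z w : E) :
    ‖P z - P w‖ ≤ ‖z - w‖ := by
  have h1 := prox_strong f hf c z (P z) (hp z) (P w)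
  have h2 := prox_strong f hf c w (P w) (hp w) (P z)
  have e1 : z - P w = (z - P z) + (P z - P w) := by abel
  have e2 : w - P z = (w - P w) - (P z - P w) := by abel
  rw [norm_sub_rev (P w) (P z), e1, norm_add_sq_real] at h1
  rw [e2, norm_sub_sq_real (w - P w) (P z - P w)] at h2
  have e3 : inner ℝ (z - P z) (P z - P w) - inner ℝ (w - P w) (P z - P w)
      = inner ℝ (z - w) (P z - P w) - ‖P z - P w‖ ^ 2 := by
    rw [← inner_sub_left, ← real_inner_self_eq_norm_sq, ← inner_sub_left]
    congr 1; abel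
  have h3 : 0 ≤ c * (inner ℝ (z - w) (P z - P w) - ‖P z - P w‖ ^ 2) := by
    rw [← e3]; linarith
  have h4 := nonneg_of_mul_nonneg_right h3 hc
  have h5 := real_inner_le_norm (z - w) (P z - P w)
  by_contra! h
  nlinarith [norm_nonneg (z - w), norm_nonneg (P z - P w)]

lemma moreau_grad {E : Type*} [NormedAddCommGroup E] [InnerProductSpace ℝ E] [CompleteSpace E]
    (f : E → ℝ) (hf : ConvexOn ℝ Set.univ f) (c : ℝ) (hc : 0 < c) (P : E → E)
    (hp : ∀ z u, f (P z) + c * ‖z - P z‖ ^ 2 ≤ f u + c * ‖z - u‖ ^ 2)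
    (M : E → ℝ) (hM : ∀ z, M z = ⨅ u : E, (f u + c * ‖z - u‖ ^ 2)) (z : E) :
    HasGradientAt M ((2 * c) • (z - P z)) z := by
  have hM' : ∀ z, M z = f (P z) + c * ‖z - P z‖ ^ 2 := by
    intro z
    rw [hM]
    apply le_antisymm
    · exact ciInf_le ⟨f (P z) + c * ‖z - P z‖ ^ 2, by rintro _ ⟨u, rfl⟩; exact hp z u⟩ (P z)
    · exact le_ciInf (hp z)
  rw [hasGradientAt_iff_isLittleO]
  have hO : (fun w => M w - M z - inner ℝ ((2 * c) • (z - P z)) (w - z)) =O[nhds z]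
      (fun w => ‖w - z‖ ^ 2) := by
    apply Asymptotics.IsBigO.of_bound c
    filter_upwards with w
    rw [Real.norm_eq_abs, Real.norm_eq_abs, abs_of_nonneg (sq_nonneg ‖w - z‖), hM' w, hM' z,
      inner_smul_left]
    simp only [conj_trivial]
    have h1 := hp w (P z)
    have h2 := hp z (P w)
    have e1 : w - P z = (z - P z) + (w - z) := by abel
    have e2 : w - P w = (z - P w) + (w - z) := by abel
    have e3 : inner ℝ (z - P w) (w - z) = inner ℝ (z - P z) (w - z)
        + inner ℝ (P z - P w) (w - z) := by
      rw [← inner_add_left]; congr 1; abel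
    have h3 := (abs_le.1 (abs_real_inner_le_norm (P z - P w) (w - z))).1
    have h4 := prox_nonexp f hf c hc P hp z w
    rw [norm_sub_rev z w] at h4
    have h5 : -‖w - z‖ ^ 2 ≤ inner ℝ (P z - P w) (w - z) := by
      nlinarith [norm_nonneg (w - z)]
    have h6 := mul_le_mul_of_nonneg_left h5 hc.le
    rw [e1, norm_add_sq_real] at h1
    have e4 : ‖w - P w‖ ^ 2 = ‖z - P w‖ ^ 2 + 2 * inner ℝ (z - P w) (w - z) + ‖w - z‖ ^ 2 := by
      rw [e2, norm_add_sq_real]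
    rw [abs_le]
    constructor
    · rw [e4, e3]; nlinarith
    · nlinarith
  refine hO.trans_isLittleO ?_
  exact Asymptotics.isLittleO_pow_sub_sub z (by norm_num : 1 < 2)

/-- Fixed points of the deterministic FedProx algorithm (Proposition 2 of Pathak–Wainwright):
if the FedProx iterates `x_j^{(t+1)} = (1/m) ∑_k prox_{s f_k} (x_k^{(t)})` converge, then all
local sequences share a common limit `x*`, and this limit satisfies
`∑_{j=1}^m ∇ M_{s f_j}(x*) = 0`, where `M_{s f_j}` is the Moreau envelope of `f_j`. -/
theorem fedprox_fixed_points
    {d m : ℕ} (hm : 0 < m)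
    (f : Fin m → EuclideanSpace ℝ (Fin d) → ℝ)
    (hconv : ∀ j, ConvexOn ℝ Set.univ (f j))
    (hdiff : ∀ j, Differentiable ℝ (f j))
    (s : ℝ) (hs : 0 < s)
    (prox : Fin m → EuclideanSpace ℝ (Fin d) → EuclideanSpace ℝ (Fin d))
    (hprox : ∀ j z u, f j (prox j z) + (2 * s)⁻¹ * ‖z - prox j z‖ ^ 2
        ≤ f j u + (2 * s)⁻¹ * ‖z - u‖ ^ 2)
    (M : Fin m → EuclideanSpace ℝ (Fin d) → ℝ)
    (hM : ∀ j z, M j z = ⨅ u : EuclideanSpace ℝ (Fin d), (f j u + (2 * s)⁻¹ * ‖z - u‖ ^ 2))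
    (x : ℕ → Fin m → EuclideanSpace ℝ (Fin d))
    (hupdate : ∀ t j, x (t + 1) j = (m : ℝ)⁻¹ • ∑ k, prox k (x t k))
    (xlim : Fin m → EuclideanSpace ℝ (Fin d))
    (hconvg : ∀ j, Tendsto (fun t => x t j) atTop (nhds (xlim j))) :
    ∃ xstar : EuclideanSpace ℝ (Fin d),
      (∀ j, xlim j = xstar) ∧
      ∑ j, gradient (M j) xstar = 0 := by
  have hc : 0 < (2 * s)⁻¹ := by positivity
  have hm' : (m : ℝ) ≠ 0 := by exact_mod_cast hm.ne'
  have heq : ∀ j k, xlim j = xlim k := by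
    intro j k
    have h1 := (tendsto_add_atTop_iff_nat 1).2 (hconvg j)
    have h2 := (tendsto_add_atTop_iff_nat 1).2 (hconvg k)
    refine tendsto_nhds_unique h1 (h2.congr fun t => ?_)
    rw [hupdate, hupdate]
  have hcont : ∀ j, Continuous (prox j) := fun j =>
    (LipschitzWith.of_dist_le_mul (K := 1) fun z w => by
      simpa [dist_eq_norm] using
        prox_nonexp (f j) (hconv j) _ hc (prox j) (hprox j) z w).continuous
  refine ⟨xlim ⟨0, hm⟩, fun j => heq _ _, ?_⟩
  set y := xlim ⟨0, hm⟩ with hy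
  have hfix : y = (m : ℝ)⁻¹ • ∑ k, prox k y := by
    have h1 := (tendsto_add_atTop_iff_nat 1).2 (hconvg ⟨0, hm⟩)
    have h2 : Tendsto (fun t => (m : ℝ)⁻¹ • ∑ k, prox k (x t k)) atTop
        (nhds ((m : ℝ)⁻¹ • ∑ k, prox k y)) := by
      refine Tendsto.const_smul (tendsto_finsetSum _ fun k _ => ?_) _
      have h3 := hconvg k
      rw [heq k ⟨0, hm⟩] at h3
      exact ((hcont k).tendsto _).comp h3
    exact tendsto_nhds_unique h1 (h2.congr fun t => (hupdate t _).symm)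
  have hsum : ∑ k, prox k y = (m : ℝ) • y := by
    exact (inv_smul_eq_iff₀ hm').1 hfix.symm
  have hg : ∀ j, gradient (M j) y = (2 * (2 * s)⁻¹) • (y - prox j y) := fun j =>
    (moreau_grad (f j) (hconv j) _ hc (prox j) (hprox j) (M j) (hM j) y).gradient
  simp_rw [hg]
  rw [← Finset.smul_sum, Finset.sum_sub_distrib, hsum]
  simp [← Nat.cast_smul_eq_nsmul ℝ]
end

section
/- Correctness of FedSplit fixed points: Let f_1, ..., f_m : R^d -> R be convex differentiable functions and let s > 0. Suppose z* = (z*_1, ..., z*_m) in (R^d)^m satisfies, for every j in {1,...,m}, the fixed-point relation z*_j = z*_j + 2*( prox_{s f_j}(2*zbar* - z*_j) - zbar* ), where zbar* = (1/m) * sum_{j=1}^m z*_j. Then x* := zbar* is a global minimizer of the function x -> sum_{j=1}^m f_j(x) over R^d. -/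
open Filter Finset

/-- Correctness of FedSplit fixed points (Proposition 3 of Pathak–Wainwright):
if `z* = (z*_1, …, z*_m)` satisfies the FedSplit fixed-point relation
`z*_j = z*_j + 2 (prox_{s f_j}(2 z̄* - z*_j) - z̄*)` for every `j`, then the block average
`x* = z̄* = (1/m) ∑_j z*_j` is a global minimizer of `x ↦ ∑_j f_j(x)`. -/
theorem fedsplit_fixed_point_correctness
    {d m : ℕ} (hm : 0 < m)
    (f : Fin m → EuclideanSpace ℝ (Fin d) → ℝ)
    (hconv : ∀ j, ConvexOn ℝ Set.univ (f j))
    (hdiff : ∀ j, Differentiable ℝ (f j))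
    (s : ℝ) (hs : 0 < s)
    (prox : Fin m → EuclideanSpace ℝ (Fin d) → EuclideanSpace ℝ (Fin d))
    (hprox : ∀ j z u, f j (prox j z) + (2 * s)⁻¹ * ‖z - prox j z‖ ^ 2
        ≤ f j u + (2 * s)⁻¹ * ‖z - u‖ ^ 2)
    (zstar : Fin m → EuclideanSpace ℝ (Fin d))
    (zbar : EuclideanSpace ℝ (Fin d))
    (hzbar : zbar = (m : ℝ)⁻¹ • ∑ j, zstar j)
    (hfix : ∀ j, zstar j = zstar j + (2 : ℝ) • (prox j ((2 : ℝ) • zbar - zstar j) - zbar)) :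
    IsMinOn (fun x => ∑ j, f j x) Set.univ zbar := by
  have hp : ∀ j, prox j ((2 : ℝ) • zbar - zstar j) = zbar := by
    intro j
    have h := hfix j
    rw [left_eq_add, smul_eq_zero] at h
    rcases h with h | h
    · norm_num at h
    · exact sub_eq_zero.mp h
  have hm' : (m : ℝ) ≠ 0 := by exact_mod_cast hm.ne'
  have hw : ∑ j, (zbar - zstar j) = 0 := by
    have h1 : (m : ℝ) • zbar = ∑ j, zstar j := by
      rw [hzbar, smul_smul, mul_inv_cancel₀ hm', one_smul]
    rw [Finset.sum_sub_distrib, ← h1]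
    simp [← Nat.cast_smul_eq_nsmul ℝ]
  have hc : 0 < (2 * s)⁻¹ := by positivity
  generalize (2 * s)⁻¹ = c at hprox hc
  intro x _
  change ∑ j, f j zbar ≤ ∑ j, f j x
  have key : ∀ t : ℝ, 0 < t → t ≤ 1 → ∀ j,
      f j zbar ≤ f j x - 2 * c * inner ℝ (zbar - zstar j) (x - zbar)
        + c * t * ‖x - zbar‖ ^ 2 := by
    intro t ht ht1 j
    have h1 := hprox j ((2 : ℝ) • zbar - zstar j) (zbar + t • (x - zbar))
    rw [hp j] at h1
    have e1 : (2 : ℝ) • zbar - zstar j - zbar = zbar - zstar j := by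
      rw [two_smul]; abel
    have e2 : (2 : ℝ) • zbar - zstar j - (zbar + t • (x - zbar))
        = (zbar - zstar j) - t • (x - zbar) := by
      rw [two_smul]; abel
    rw [e1, e2, norm_sub_sq_real (zbar - zstar j), inner_smul_right, norm_smul, mul_pow,
      Real.norm_eq_abs, sq_abs] at h1
    have h2 := (hconv j).2 (Set.mem_univ zbar) (Set.mem_univ x)
      (sub_nonneg.mpr ht1) ht.le (by ring)
    have e3 : (1 - t) • zbar + t • x = zbar + t • (x - zbar) := by
      rw [sub_smul, smul_sub, one_smul]; abel
    rw [e3, smul_eq_mul, smul_eq_mul] at h2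
    refine le_of_mul_le_mul_left ?_ ht
    linarith
  have key2 : ∀ t : ℝ, 0 < t → t ≤ 1 →
      ∑ j, f j zbar ≤ ∑ j, f j x + t * (m * (c * ‖x - zbar‖ ^ 2)) := by
    intro t ht ht1
    have h := Finset.sum_le_sum (fun j (_ : j ∈ Finset.univ) => key t ht ht1 j)
    rw [Finset.sum_add_distrib, Finset.sum_sub_distrib, ← Finset.mul_sum, ← sum_inner, hw,
      inner_zero_left] at h
    simp only [Finset.sum_const, Finset.card_univ, Fintype.card_fin, nsmul_eq_mul] at h
    linarith
  have hK : 0 ≤ (m : ℝ) * (c * ‖x - zbar‖ ^ 2) := by positivity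
  generalize (m : ℝ) * (c * ‖x - zbar‖ ^ 2) = K at key2 hK
  refine le_of_forall_pos_le_add fun ε hε => ?_
  have hpos : 0 < K + 1 := by linarith
  have h := key2 (min 1 (ε / (K + 1))) (lt_min one_pos (by positivity)) (min_le_left _ _)
  have h3 : min 1 (ε / (K + 1)) * K ≤ ε := by
    calc min 1 (ε / (K + 1)) * K ≤ ε / (K + 1) * (K + 1) :=
          mul_le_mul (min_le_right _ _) (by linarith) hK (by positivity)
      _ = ε := div_mul_cancel₀ _ hpos.ne'
  linarith
end

section
/- Convergence of FedSplit with uniformly inexact proximal updates: Let f_j : R^d -> R be l_j-strongly convex and L_j-smooth for j = 1,...,m; set l* = min_j l_j, L* = max_j L_j, and kappa = L*/l*. Run the FedSplit procedure with stepsize s = 1/sqrt(l* L*), where each local proximal update uses an approximate solver satisfying ||prox_update_j(z) - prox_{s f_j}(z)|| <= b for all j and all z in R^d. Let x* be the minimizer of sum_j f_j and let z* in (R^d)^m be the unique fixed point of the exact FedSplit iteration. Then for every t >= 1, the server iterate satisfies ||x^{(t+1)} - x*|| <= (1 - 2/(sqrt(kappa)+1))^t * ||z^{(1)} - z*|| /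 sqrt(m) + (sqrt(kappa)+1)*b. -/
open Filter Finset RealInnerProductSpace

section FedSplitAux

variable {E : Type*} [NormedAddCommGroup E] [InnerProductSpace ℝ E] [CompleteSpace E]

lemma fs_descent (f : E → ℝ) (hd : Differentiable ℝ f) (L : ℝ)
    (hL : ∀ x y, ‖gradient f x - gradient f y‖ ≤ L * ‖x - y‖) (x v : E) :
    f (x + v) ≤ f x + ⟪gradient f x, v⟫ + L / 2 * ‖v‖ ^ 2 := by
  have hder : ∀ t : ℝ, HasDerivAt (fun t : ℝ => f (x + t • v) - t * ⟪gradient f x, v⟫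
      - L / 2 * ‖v‖ ^ 2 * t ^ 2)
      (⟪gradient f (x + t • v), v⟫ - ⟪gradient f x, v⟫ - L * ‖v‖ ^ 2 * t) t := by
    intro t
    have h1 : HasDerivAt (fun t : ℝ => x + t • v) v t := by
      simpa using ((hasDerivAt_id t).smul_const v).const_add x
    have h2 := ((hd (x + t • v)).hasGradientAt.hasFDerivAt).comp_hasDerivAt t h1
    have h3 : HasDerivAt (fun t : ℝ => t * ⟪gradient f x, v⟫) ⟪gradient f x, v⟫ t := by
      simpa using (hasDerivAt_id t).mul_const (⟪gradient f x, v⟫)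
    have h4 : HasDerivAt (fun t : ℝ => L / 2 * ‖v‖ ^ 2 * t ^ 2) (L * ‖v‖ ^ 2 * t) t := by
      have := (hasDerivAt_pow 2 t).const_mul (L / 2 * ‖v‖ ^ 2)
      have e : L / 2 * ‖v‖ ^ 2 * (((2 : ℕ) : ℝ) * t ^ (2 - 1)) = L * ‖v‖ ^ 2 * t := by
        norm_num
        ring
      rw [e] at this
      exact this
    have h5 := (h2.sub h3).sub h4
    rw [InnerProductSpace.toDual_apply_apply] at h5
    exact h5
  have hanti : AntitoneOn (fun t : ℝ => f (x + t • v) - t * ⟪gradient f x, v⟫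
      - L / 2 * ‖v‖ ^ 2 * t ^ 2) (Set.Icc 0 1) := by
    apply antitoneOn_of_deriv_nonpos (convex_Icc 0 1)
    · exact fun t _ => (hder t).continuousAt.continuousWithinAt
    · exact fun t _ => (hder t).differentiableAt.differentiableWithinAt
    · intro t ht
      rw [interior_Icc] at ht
      rw [(hder t).deriv, ← inner_sub_left]
      have h1 := real_inner_le_norm (gradient f (x + t • v) - gradient f x) v
      have h2 := hL (x + t • v) x
      rw [add_sub_cancel_left, norm_smul, Real.norm_of_nonneg ht.1.le] at h2
      have h3 := mul_le_mul_of_nonneg_right h2 (norm_nonneg v)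
      nlinarith
  have := hanti (Set.left_mem_Icc.2 zero_le_one) (Set.right_mem_Icc.2 zero_le_one) zero_le_one
  simp [-inner_gradient_left] at this
  linarith

lemma fs_mono (f : E → ℝ) (l : ℝ)
    (hs : ∀ x y, f y ≥ f x + ⟪gradient f x, y - x⟫ + l / 2 * ‖y - x‖ ^ 2) (x y : E) :
    l * ‖x - y‖ ^ 2 ≤ ⟪gradient f x - gradient f y, x - y⟫ := by
  have h1 := hs x y
  have h2 := hs y x
  rw [norm_sub_rev y x, ← neg_sub x y, inner_neg_right] at h1
  rw [inner_sub_left]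
  linarith

lemma fs_coco (f : E → ℝ) (hd : Differentiable ℝ f) (l L : ℝ) (hl : 0 < l) (hlL : l ≤ L)
    (hs : ∀ x y, f y ≥ f x + ⟪gradient f x, y - x⟫ + l / 2 * ‖y - x‖ ^ 2)
    (hL : ∀ x y, ‖gradient f x - gradient f y‖ ≤ L * ‖x - y‖) (x y : E) :
    l * L * ‖x - y‖ ^ 2 + ‖gradient f x - gradient f y‖ ^ 2
      ≤ (l + L) * ⟪gradient f x - gradient f y, x - y⟫ := by
  rcases hlL.eq_or_lt with rfl | hlt
  · have h1 := fs_mono f l hs x y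
    have h2 := hL x y
    have h3 : ‖gradient f x - gradient f y‖ ^ 2 ≤ (l * ‖x - y‖) ^ 2 :=
      pow_le_pow_left₀ (norm_nonneg _) h2 2
    nlinarith
  · have hM : 0 < L - l := by linarith
    -- one-sided estimate
    have key : ∀ x y : E, (L - l) * (f x + ⟪gradient f x, y - x⟫ + l / 2 * ‖y - x‖ ^ 2)
        + 1 / 2 * ‖gradient f y - gradient f x - l • (y - x)‖ ^ 2 ≤ (L - l) * f y := by
      intro x y
      set w := gradient f y - gradient f x - l • (y - x) with hw
      have h1 := hs x (y + (-(L - l)⁻¹) • w)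
      have h2 := fs_descent f hd L hL y ((-(L - l)⁻¹) • w)
      have e1 : y + (-(L - l)⁻¹) • w - x = (y - x) + (-(L - l)⁻¹) • w := by abel
      rw [e1, norm_add_sq_real, inner_add_right, inner_smul_right, inner_smul_right, norm_smul,
        mul_pow, Real.norm_eq_abs, sq_abs] at h1
      rw [inner_smul_right, norm_smul, mul_pow, Real.norm_eq_abs, sq_abs] at h2
      have e2 : ‖w‖ ^ 2 = ⟪gradient f y, w⟫ - ⟪gradient f x, w⟫ - l * ⟪y - x, w⟫ := by
        rw [← real_inner_self_eq_norm_sq]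
        nth_rewrite 1 [hw]
        rw [inner_sub_left, inner_sub_left, inner_smul_left]
        simp
      have h3 := h1.le.trans h2
      generalize ⟪gradient f y, w⟫ = a at *
      generalize ⟪gradient f x, w⟫ = b at *
      generalize ⟪y - x, w⟫ = c at *
      generalize ⟪gradient f x, y - x⟫ = g at *
      generalize ‖w‖ ^ 2 = W at *
      generalize ‖y - x‖ ^ 2 = Y at *
      have h4 := mul_le_mul_of_nonneg_left h3 hM.le
      have hi : (L - l) * (L - l)⁻¹ = 1 := mul_inv_cancel₀ hM.ne'
      generalize (L - l)⁻¹ = i at *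
      have e3 : a = W + b + l * c := by linarith
      subst e3
      have : (L - l) * (f x + (g + -i * b) + l / 2 * (Y + 2 * (-i * c) + (-i) ^ 2 * W))
        - (L - l) * (f y + -i * (W + b + l * c) + L / 2 * ((-i) ^ 2 * W))
        = (L - l) * (f x + g + l / 2 * Y) - (L - l) * f y + ((L - l) * i) * W
          - 1 / 2 * ((L - l) * i) ^ 2 * W := by ring
      rw [hi] at this
      linarith
    have h1 := key x y
    have h2 := key y x
    have e1 : ‖gradient f y - gradient f x - l • (y - x)‖ ^ 2
        = ‖gradient f x - gradient f y - l • (x - y)‖ ^ 2 := by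
      rw [← norm_neg]
      congr 2
      rw [← neg_sub x y, smul_neg]
      abel
    have e2 : ‖gradient f x - gradient f y - l • (x - y)‖ ^ 2 = ‖gradient f x - gradient f y‖ ^ 2
        - 2 * l * ⟪gradient f x - gradient f y, x - y⟫ + l ^ 2 * ‖x - y‖ ^ 2 := by
      rw [norm_sub_sq_real, inner_smul_right, norm_smul, mul_pow, Real.norm_eq_abs, sq_abs]
      ring
    rw [e1, e2, norm_sub_rev y x, ← neg_sub x y, inner_neg_right] at h1
    rw [e2] at h2
    have e3 : ⟪gradient f x - gradient f y, x - y⟫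
      = ⟪gradient f x, x - y⟫ - ⟪gradient f y, x - y⟫ := inner_sub_left _ _ _
    rw [e3] at h1 h2 ⊢
    have h6 : 0 < (L - l) := hM
    have h7 := add_le_add h1 h2
    ring_nf at h7 ⊢
    nlinarith

lemma fs_contr (u g : E) (l L s : ℝ) (hl : 0 < l) (hlL : l ≤ L)
    (hs : s = 1 / Real.sqrt (l * L))
    (h : l * L * ‖u‖ ^ 2 + ‖g‖ ^ 2 ≤ (l + L) * ⟪g, u⟫) :
    ‖u - s • g‖ ≤ (1 - 2 / (Real.sqrt (L / l) + 1)) * ‖u + s • g‖ := by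
  have hL : 0 < L := by linarith
  obtain ⟨a, ha, rfl⟩ : ∃ a : ℝ, 0 < a ∧ a ^ 2 = l :=
    ⟨√l, Real.sqrt_pos.2 hl, Real.sq_sqrt hl.le⟩
  obtain ⟨c, hc, rfl⟩ : ∃ c : ℝ, 0 < c ∧ c ^ 2 = L :=
    ⟨√L, Real.sqrt_pos.2 hL, Real.sq_sqrt hL.le⟩
  have hac : a ≤ c := by
    by_contra hh
    push Not at hh
    nlinarith
  rw [← div_pow, Real.sqrt_sq (by positivity)]
  rw [← mul_pow, Real.sqrt_sq (by positivity)] at hs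
  have hr : 1 - 2 / (c / a + 1) = (c - a) / (c + a) := by
    field_simp
    ring
  rw [hr]
  have hr0 : 0 ≤ (c - a) / (c + a) := div_nonneg (by linarith) (by linarith)
  refine abs_le_of_sq_le_sq' ?_ (by positivity) |>.2
  rw [mul_pow, div_pow, norm_sub_sq_real, norm_add_sq_real, inner_smul_right, norm_smul, mul_pow,
    Real.norm_eq_abs, sq_abs, real_inner_comm]
  generalize ⟪g, u⟫ = q at *
  generalize ‖u‖ ^ 2 = U at *
  generalize ‖g‖ ^ 2 = G at *
  rw [div_mul_eq_mul_div, le_div_iff₀ (by positivity)]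
  have hs0 : 0 < s := by rw [hs]; positivity
  have hs1 : s * (a * c) = 1 := by rw [hs]; field_simp
  have h8 := mul_le_mul_of_nonneg_left h hs0.le
  have e1 : s * (a ^ 2 * c ^ 2 * U + G) = (s * (a * c)) * (a * c) * U + s * G := by ring
  have e2 : a * c * (s ^ 2 * G) = s * (s * (a * c)) * G := by ring
  rw [hs1] at e1 e2
  rw [e1] at h8
  nlinarith

lemma fs_prox (f : E → ℝ) (hd : Differentiable ℝ f) (s : ℝ) (hs : 0 < s) (z p : E)
    (h : ∀ u, f p + (2 * s)⁻¹ * ‖z - p‖ ^ 2 ≤ f u + (2 * s)⁻¹ * ‖z - u‖ ^ 2) :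
    s • gradient f p = z - p := by
  have h1 : HasFDerivAt f _ p := (hd p).hasGradientAt.hasFDerivAt
  have h2 : HasFDerivAt (fun u : E => z - u) (-ContinuousLinearMap.id ℝ E) p :=
    (hasFDerivAt_id p).const_sub z
  have h3 := h1.add ((h2.norm_sq).const_mul ((2 * s)⁻¹))
  have hmin : IsLocalMin (fun u => f u + (2 * s)⁻¹ * ‖z - u‖ ^ 2) p :=
    Filter.Eventually.of_forall h
  have h4 := hmin.hasFDerivAt_eq_zero h3
  refine ext_inner_right ℝ fun v => ?_
  have h5 : ⟪gradient f p, v⟫ + (2 * s)⁻¹ * (2 * (-⟪z - p, v⟫)) = 0 := by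
    have h5 := congrArg (fun A => A v) h4
    simpa [inner_sub_left] using h5
  rw [inner_smul_left]
  simp only [conj_trivial]
  generalize ⟪gradient f p, v⟫ = q at *
  generalize ⟪z - p, v⟫ = r at *
  field_simp at h5
  linarith

end FedSplitAux

section FedSplitAux2

variable {E : Type*} [NormedAddCommGroup E] [InnerProductSpace ℝ E]

lemma fs_reflect {m : ℕ} (hm : 0 < m) (w : Fin m → E) :
    ∑ j, ‖(2 : ℝ) • ((m : ℝ)⁻¹ • ∑ k, w k) - w j‖ ^ 2 = ∑ j, ‖w j‖ ^ 2 := by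
  have hm' : (m : ℝ) ≠ 0 := by positivity
  set a := (m : ℝ)⁻¹ • ∑ k, w k with ha
  have hsum : ∑ k, w k = (m : ℝ) • a := by rw [ha, smul_smul, mul_inv_cancel₀ hm', one_smul]
  have h1 : ∀ j, ‖(2 : ℝ) • a - w j‖ ^ 2 = 4 * ‖a‖ ^ 2 - 4 * ⟪a, w j⟫ + ‖w j‖ ^ 2 := by
    intro j
    rw [norm_sub_sq_real, inner_smul_left, norm_smul, mul_pow]
    norm_num
    ring
  simp_rw [h1]
  rw [sum_add_distrib, sum_sub_distrib, ← mul_sum, ← mul_sum, ← inner_sum, hsum, inner_smul_right,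
    real_inner_self_eq_norm_sq]
  simp

lemma fs_avg {m : ℕ} (hm : 0 < m) (w : PiLp 2 (fun _ : Fin m => E)) :
    ‖(m : ℝ)⁻¹ • ∑ k, w k‖ ≤ ‖w‖ / Real.sqrt m := by
  have hm' : (0 : ℝ) < m := by positivity
  rw [le_div_iff₀ (Real.sqrt_pos.2 hm')]
  refine (abs_le_of_sq_le_sq' ?_ (norm_nonneg _)).2
  rw [mul_pow, Real.sq_sqrt hm'.le, PiLp.norm_sq_eq_of_L2, norm_smul, mul_pow]
  have h1 : ‖∑ k, w k‖ ^ 2 ≤ m * ∑ k, ‖w k‖ ^ 2 := by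
    have h2 : ‖∑ k, w k‖ ≤ ∑ k, ‖w k‖ := norm_sum_le _ _
    have h3 : (∑ k, ‖w k‖) ^ 2 ≤ (Finset.univ : Finset (Fin m)).card * ∑ k, ‖w k‖ ^ 2 :=
      sq_sum_le_card_mul_sum_sq
    rw [Finset.card_univ, Fintype.card_fin] at h3
    exact (pow_le_pow_left₀ (norm_nonneg _) h2 2).trans h3
  rw [Real.norm_of_nonneg (by positivity)]
  calc (m : ℝ)⁻¹ ^ 2 * ‖∑ k, w k‖ ^ 2 * m ≤ (m : ℝ)⁻¹ ^ 2 * (m * ∑ k, ‖w k‖ ^ 2) * m := by gcongr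
    _ = _ := by field_simp

end FedSplitAux2



/-- Convergence of FedSplit with uniformly inexact proximal updates (Theorem 1 of
Pathak–Wainwright). Each `f_j` is `l_j`-strongly convex and `L_j`-smooth; `l* = min_j l_j`,
`L* = max_j L_j`, `κ = L*/l*`, and the stepsize is `s = 1/√(l* L*)`.  The approximate proximal
solvers satisfy `‖prox_update_j(z) - prox_{s f_j}(z)‖ ≤ b` uniformly.  Then for every `t ≥ 1`
the server iterate satisfies
`‖x^{(t+1)} - x*‖ ≤ (1 - 2/(√κ+1))^t ‖z^{(1)} - z*‖/√m + (√κ+1) b`. -/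
theorem fedsplit_inexact_convergence
    {d m : ℕ} (hm : 0 < m)
    (f : Fin m → EuclideanSpace ℝ (Fin d) → ℝ)
    (hdiff : ∀ j, Differentiable ℝ (f j))
    (l L : Fin m → ℝ) (hl : ∀ j, 0 < l j)
    (hstrong : ∀ j x y, f j y ≥ f j x + ⟪gradient (f j) x, y - x⟫ + l j / 2 * ‖y - x‖ ^ 2)
    (hsmooth : ∀ j x y, ‖gradient (f j) x - gradient (f j) y‖ ≤ L j * ‖x - y‖)
    (lstar Lstar : ℝ)
    (hlstar : IsLeast (Set.range l) lstar)
    (hLstar : IsGreatest (Set.range L) Lstar)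
    (kappa : ℝ) (hkappa : kappa = Lstar / lstar)
    (s : ℝ) (hs : s = 1 / Real.sqrt (lstar * Lstar))
    (prox : Fin m → EuclideanSpace ℝ (Fin d) → EuclideanSpace ℝ (Fin d))
    (hprox : ∀ j z u, f j (prox j z) + (2 * s)⁻¹ * ‖z - prox j z‖ ^ 2
        ≤ f j u + (2 * s)⁻¹ * ‖z - u‖ ^ 2)
    (proxU : Fin m → EuclideanSpace ℝ (Fin d) → EuclideanSpace ℝ (Fin d))
    (b : ℝ)
    (hproxU : ∀ j z, ‖proxU j z - prox j z‖ ≤ b)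
    -- FedSplit iterates, indexed from t = 1
    (z : ℕ → PiLp 2 (fun _ : Fin m => EuclideanSpace ℝ (Fin d)))
    (x : ℕ → EuclideanSpace ℝ (Fin d))
    (hinit : ∀ j, z 1 j = x 1)
    (hupdate : ∀ t, 1 ≤ t → ∀ j,
      z (t + 1) j = z t j + (2 : ℝ) • (proxU j ((2 : ℝ) • x t - z t j) - x t))
    (hserver : ∀ t, 1 ≤ t → x (t + 1) = (m : ℝ)⁻¹ • ∑ j, z (t + 1) j)
    -- minimizer of the federated objective
    (xstar : EuclideanSpace ℝ (Fin d))
    (hxstar : IsMinOn (fun y => ∑ j, f j y) Set.univ xstar)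
    -- the unique fixed point of the exact FedSplit iteration
    (zstar : PiLp 2 (fun _ : Fin m => EuclideanSpace ℝ (Fin d)))
    (hzstar : ∀ j, zstar j = zstar j + (2 : ℝ) •
      (prox j ((2 : ℝ) • ((m : ℝ)⁻¹ • ∑ k, zstar k) - zstar j)
        - (m : ℝ)⁻¹ • ∑ k, zstar k)) :
    ∀ t, 1 ≤ t →
      ‖x (t + 1) - xstar‖
        ≤ (1 - 2 / (Real.sqrt kappa + 1)) ^ t * ‖z 1 - zstar‖ / Real.sqrt (m : ℝ)
          + (Real.sqrt kappa + 1) * b := by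
  have hm' : (0 : ℝ) < m := by positivity
  let j0 : Fin m := ⟨0, hm⟩
  have hb : 0 ≤ b := (norm_nonneg _).trans (hproxU j0 0)
  have hk1 : 0 < Real.sqrt kappa + 1 := by positivity
  rcases subsingleton_or_nontrivial (EuclideanSpace ℝ (Fin d)) with hsub | hnon
  · intro t _
    have h1 : z 1 = zstar := by
      ext j : 1
      exact Subsingleton.elim _ _
    have h2 : x (t + 1) = xstar := Subsingleton.elim _ _
    rw [h1, h2]
    simp
    positivity
  have hlj : ∀ j, lstar ≤ l j := fun j => hlstar.2 ⟨j, rfl⟩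
  have hLj : ∀ j, L j ≤ Lstar := fun j => hLstar.2 ⟨j, rfl⟩
  have hl0 : 0 < lstar := by
    obtain ⟨j, hj⟩ := hlstar.1
    rw [← hj]
    exact hl j
  have hS : ∀ j x y, f j y ≥ f j x + ⟪gradient (f j) x, y - x⟫ + lstar / 2 * ‖y - x‖ ^ 2 := by
    intro j x y
    have h1 := hstrong j x y
    have h2 := mul_le_mul_of_nonneg_right (hlj j) (sq_nonneg ‖y - x‖)
    linarith
  have hM : ∀ j x y, ‖gradient (f j) x - gradient (f j) y‖ ≤ Lstar * ‖x - y‖ := fun j x y =>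
    (hsmooth j x y).trans (mul_le_mul_of_nonneg_right (hLj j) (norm_nonneg _))
  have hlL : lstar ≤ Lstar := by
    obtain ⟨u, hu⟩ := exists_ne (0 : EuclideanSpace ℝ (Fin d))
    have h1 := fs_mono (f j0) lstar (hS j0) u 0
    have h2 := real_inner_le_norm (gradient (f j0) u - gradient (f j0) 0) (u - 0)
    have h3 := mul_le_mul_of_nonneg_right (hM j0 u 0) (norm_nonneg (u - 0))
    rw [sub_zero] at *
    have hu' : 0 < ‖u‖ ^ 2 := by positivity
    refine le_of_mul_le_mul_right ?_ hu'
    linarith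
  have hL0 : 0 < Lstar := hl0.trans_le hlL
  have hs0 : 0 < s := by rw [hs]; positivity
  have hopt : ∀ j w, s • gradient (f j) (prox j w) = w - prox j w := fun j w =>
    fs_prox (f j) (hdiff j) s hs0 w _ (hprox j w)
  set ρ := 1 - 2 / (Real.sqrt kappa + 1) with hρ
  have hk2 : 1 ≤ Real.sqrt kappa := by
    rw [Real.one_le_sqrt, hkappa, le_div_iff₀ hl0]
    linarith
  have hρ0 : 0 ≤ ρ := by
    rw [hρ, sub_nonneg, div_le_one hk1]
    linarith
  -- contraction of the reflected proximal operator
  have hcon : ∀ j w v, ‖((2 : ℝ) • prox j w - w) - ((2 : ℝ) • prox j v - v)‖ ≤ ρ * ‖w - v‖ := by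
    intro j w v
    have h1 := fs_coco (f j) (hdiff j) lstar Lstar hl0 hlL (hS j) (hM j) (prox j w) (prox j v)
    have h2 := fs_contr _ _ lstar Lstar s hl0 hlL hs h1
    rw [← hkappa, smul_sub, hopt, hopt] at h2
    have e1 : ((2 : ℝ) • prox j w - w) - ((2 : ℝ) • prox j v - v)
        = prox j w - prox j v - (w - prox j w - (v - prox j v)) := by
      rw [two_smul, two_smul]
      abel
    have e2 : w - v = prox j w - prox j v + (w - prox j w - (v - prox j v)) := by abel
    rw [e1, e2]
    exact h2
  set a := (m : ℝ)⁻¹ • ∑ k, zstar k with ha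
  have hfix : ∀ j, prox j ((2 : ℝ) • a - zstar j) = a := by
    intro j
    have h1 := hzstar j
    have h2 : (2 : ℝ) • (prox j ((2 : ℝ) • a - zstar j) - a) = 0 := by
      simpa using h1
    have h3 := (smul_eq_zero.1 h2).resolve_left two_ne_zero
    exact sub_eq_zero.1 h3
  have hsuma : ∑ k, zstar k = (m : ℝ) • a := by
    rw [ha, smul_smul, mul_inv_cancel₀ hm'.ne', one_smul]
  have hgrad : ∑ j, gradient (f j) a = 0 := by
    have h1 : s • ∑ j, gradient (f j) a = 0 := by
      rw [Finset.smul_sum]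
      have : ∀ j, s • gradient (f j) a = a - zstar j := by
        intro j
        have := hopt j ((2 : ℝ) • a - zstar j)
        rw [hfix, two_smul] at this
        rw [this]
        abel
      simp_rw [this]
      rw [Finset.sum_sub_distrib, hsuma]
      simp [Nat.cast_smul_eq_nsmul]
    exact (smul_eq_zero.1 h1).resolve_left hs0.ne'
  have hxa : xstar = a := by
    have h1 : ∑ j, f j xstar ≤ ∑ j, f j a := hxstar (Set.mem_univ a)
    have h2 : ∑ j, (f j a + ⟪gradient (f j) a, xstar - a⟫ + lstar / 2 * ‖xstar - a‖ ^ 2)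
        ≤ ∑ j, f j xstar := Finset.sum_le_sum fun j _ => hS j a xstar
    rw [Finset.sum_add_distrib, Finset.sum_add_distrib, ← sum_inner, hgrad, inner_zero_left,
      Finset.sum_const, Finset.card_univ, Fintype.card_fin, nsmul_eq_mul] at h2
    have h3 : (m : ℝ) * (lstar / 2) * ‖xstar - a‖ ^ 2 ≤ 0 := by linarith
    have h4 : ‖xstar - a‖ ^ 2 ≤ 0 := by
      by_contra hh
      push Not at hh
      have : 0 < (m : ℝ) * (lstar / 2) * ‖xstar - a‖ ^ 2 := by positivity
      linarith
    have h5 : ‖xstar - a‖ = 0 := by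
      have := sq_nonneg ‖xstar - a‖
      exact pow_eq_zero_iff (two_ne_zero) |>.1 (le_antisymm h4 this)
    exact sub_eq_zero.1 (norm_eq_zero.1 h5)
  have hx : ∀ t, 1 ≤ t → x t = (m : ℝ)⁻¹ • ∑ j, z t j := by
    intro t ht
    rcases ht.eq_or_lt with rfl | ht
    · simp_rw [hinit]
      rw [Finset.sum_const, Finset.card_univ, Fintype.card_fin, ← Nat.cast_smul_eq_nsmul ℝ,
        smul_smul, inv_mul_cancel₀ hm'.ne', one_smul]
    · obtain ⟨k, rfl⟩ : ∃ k, t = k + 1 := ⟨t - 1, by omega⟩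
      exact hserver k (by omega)
  have hdiffavg : ∀ t, 1 ≤ t → x t - a = (m : ℝ)⁻¹ • ∑ j, (z t - zstar) j := by
    intro t ht
    rw [hx t ht, ha, ← smul_sub, ← Finset.sum_sub_distrib]
    rfl
  have hstep : ∀ t, 1 ≤ t →
      ‖z (t + 1) - zstar‖ ≤ ρ * ‖z t - zstar‖ + 2 * b * Real.sqrt m := by
    intro t ht
    let T : PiLp 2 (fun _ : Fin m => EuclideanSpace ℝ (Fin d)) :=
      WithLp.toLp 2 fun j => z t j + (2 : ℝ) • (prox j ((2 : ℝ) • x t - z t j) - x t)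
    have hT : ∀ j, T j = z t j + (2 : ℝ) • (prox j ((2 : ℝ) • x t - z t j) - x t) := fun j => rfl
    have h1 : ‖z (t + 1) - T‖ ≤ 2 * b * Real.sqrt m := by
      refine (abs_le_of_sq_le_sq' ?_ (by positivity)).2
      rw [PiLp.norm_sq_eq_of_L2, mul_pow, Real.sq_sqrt hm'.le]
      have : ∀ j ∈ (Finset.univ : Finset (Fin m)), ‖(z (t + 1) - T) j‖ ^ 2 ≤ (2 * b) ^ 2 := by
        intro j _
        have e : (z (t + 1) - T) j = (2 : ℝ) • (proxU j ((2 : ℝ) • x t - z t j)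
            - prox j ((2 : ℝ) • x t - z t j)) := by
          rw [PiLp.sub_apply, hT, hupdate t ht, smul_sub, smul_sub, smul_sub]
          abel
        rw [e, norm_smul, Real.norm_of_nonneg zero_le_two]
        have := hproxU j ((2 : ℝ) • x t - z t j)
        gcongr
      have h2 := Finset.sum_le_card_nsmul _ _ _ this
      rw [Finset.card_univ, Fintype.card_fin, nsmul_eq_mul] at h2
      linarith
    have h2 : ‖T - zstar‖ ≤ ρ * ‖z t - zstar‖ := by
      refine (abs_le_of_sq_le_sq' ?_ (by positivity)).2
      rw [mul_pow, PiLp.norm_sq_eq_of_L2, PiLp.norm_sq_eq_of_L2, ← fs_reflect hm (z t - zstar).ofLp,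
        Finset.mul_sum]
      refine Finset.sum_le_sum fun j _ => ?_
      rw [← mul_pow, ← hdiffavg t ht]
      refine pow_le_pow_left₀ (norm_nonneg _) ?_ 2
      have h3 := hcon j ((2 : ℝ) • x t - z t j) ((2 : ℝ) • a - zstar j)
      rw [hfix] at h3
      have e1 : (T - zstar) j = (2 : ℝ) • prox j ((2 : ℝ) • x t - z t j) - ((2 : ℝ) • x t - z t j)
          - ((2 : ℝ) • a - ((2 : ℝ) • a - zstar j)) := by
        rw [PiLp.sub_apply, hT, smul_sub]
        abel
      have e2 : (2 : ℝ) • (x t - a) - (z t - zstar) j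
          = (2 : ℝ) • x t - z t j - ((2 : ℝ) • a - zstar j) := by
        rw [PiLp.sub_apply, smul_sub]
        abel
      rw [e1, e2]
      exact h3
    calc ‖z (t + 1) - zstar‖ = ‖(T - zstar) + (z (t + 1) - T)‖ := by congr 1; abel
      _ ≤ _ := (norm_add_le _ _).trans (add_le_add h2 h1)
  have hfin : ∀ t : ℕ, ‖z (t + 1) - zstar‖ ≤ ρ ^ t * ‖z 1 - zstar‖
      + (Real.sqrt kappa + 1) * b * Real.sqrt m := by
    intro t
    induction t with
    | zero =>
      have : 0 ≤ (Real.sqrt kappa + 1) * b * Real.sqrt m := by positivity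
      simpa using this
    | succ k ih =>
      have h1 := hstep (k + 1) (by omega)
      have h2 := mul_le_mul_of_nonneg_left ih hρ0
      have h3 : ρ * (Real.sqrt kappa + 1) = Real.sqrt kappa + 1 - 2 := by
        rw [hρ]
        field_simp
      have h4 : ρ * (ρ ^ k * ‖z 1 - zstar‖ + (Real.sqrt kappa + 1) * b * Real.sqrt m)
          = ρ ^ (k + 1) * ‖z 1 - zstar‖
            + (ρ * (Real.sqrt kappa + 1)) * b * Real.sqrt m := by ring
      rw [h4, h3] at h2
      linarith
  intro t ht
  rw [hxa, hdiffavg (t + 1) (by omega)]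
  have hsq : 0 < Real.sqrt m := Real.sqrt_pos.2 hm'
  calc _ ≤ ‖z (t + 1) - zstar‖ / Real.sqrt m := fs_avg hm _
    _ ≤ (ρ ^ t * ‖z 1 - zstar‖ + (Real.sqrt kappa + 1) * b * Real.sqrt m) / Real.sqrt m := by
      gcongr
      exact hfin t
    _ = _ := by field_simp
end

section
/- FedSplit convergence with general per-round residuals: Let f_j : R^d -> R be l_j-strongly convex and L_j-smooth for j = 1,...,m; set l* = min_j l_j, L* = max_j L_j, kappa = L*/l*, and s = 1/sqrt(l* L*). Let z^{(t)} in (R^d)^m be the iterates of FedSplit with approximate proximal solvers, and define the residual r^{(t)} = prox_tilde(2*zbar^{(t)} - z^{(t)}) - prox_{s F}(2*zbar^{(t)} - z^{(t)}), where 2*zbar^{(t)} - z^{(t)} has j-th block 2*zbar^{(t)} - z_j^{(t)}, prox_{s F} acts blockwise as (prox_{s f_1}, ..., prox_{s f_m}), and prox_tilde acts blockwise with the approximate solvers. Then the exact FedSplit iteration has a unique fixed point z* in (R^d)^m, and for all t >= 1, ||z^{(t+1)} - z*|| <= rho^t * ||z^{(1)} - z*|| + 2 * sum_{j=1}^t rho^{t-j}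 * ||r^{(j)}||, where rho = 1 - 2/(sqrt(kappa)+1). -/
open Filter Finset RealInnerProductSpace

section helpers

variable {d : ℕ}


/-- Descent lemma. -/
lemma aux_descent (f : EuclideanSpace ℝ (Fin d) → ℝ) (hf : Differentiable ℝ f) (L : ℝ)
    (hL : ∀ x y, ‖gradient f x - gradient f y‖ ≤ L * ‖x - y‖) (x v : EuclideanSpace ℝ (Fin d)) :
    f (x + v) ≤ f x + ⟪gradient f x, v⟫ + L / 2 * ‖v‖ ^ 2 := by
  have hder : ∀ t : ℝ, HasDerivAt
      (fun t : ℝ => f (x + t • v) - t * ⟪gradient f x, v⟫ - L / 2 * t ^ 2 * ‖v‖ ^ 2)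
      (⟪gradient f (x + t • v), v⟫ - ⟪gradient f x, v⟫ - L * t * ‖v‖ ^ 2) t := by
    intro t
    have h1 : HasDerivAt (fun t : ℝ => x + t • v) v t := by
      simpa using ((hasDerivAt_id t).smul_const v).const_add x
    have h2 := (hf (x + t • v)).hasGradientAt.hasFDerivAt.comp_hasDerivAt t h1
    have h3 := (hasDerivAt_id t).mul_const ⟪gradient f x, v⟫
    have h4 := (((hasDerivAt_pow 2 t).const_mul (L / 2)).mul_const (‖v‖ ^ 2))
    have h5 := (h2.sub h3).sub h4
    refine HasDerivAt.congr_deriv h5 ?_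
    rw [InnerProductSpace.toDual_apply_apply]
    push_cast
    ring
  have hanti : AntitoneOn
      (fun t : ℝ => f (x + t • v) - t * ⟪gradient f x, v⟫ - L / 2 * t ^ 2 * ‖v‖ ^ 2)
      (Set.Icc 0 1) := by
    apply antitoneOn_of_deriv_nonpos (convex_Icc 0 1)
    · exact fun t _ => (hder t).continuousAt.continuousWithinAt
    · exact fun t _ => (hder t).differentiableAt.differentiableWithinAt
    · intro t ht
      rw [interior_Icc] at ht
      rw [(hder t).deriv, ← inner_sub_left]
      have h1 := real_inner_le_norm (gradient f (x + t • v) - gradient f x) v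
      have h2 := hL (x + t • v) x
      rw [add_sub_cancel_left, norm_smul, Real.norm_of_nonneg ht.1.le] at h2
      have h3 := mul_le_mul_of_nonneg_right h2 (norm_nonneg v)
      nlinarith
  have h := hanti (Set.left_mem_Icc.2 zero_le_one) (Set.right_mem_Icc.2 zero_le_one) zero_le_one
  simp [-inner_gradient_left] at h
  linarith

/-- Interpolation inequality. -/
lemma aux_coco (f : EuclideanSpace ℝ (Fin d) → ℝ) (hf : Differentiable ℝ f) (l L : ℝ) (hlL : l ≤ L)
    (hl : ∀ x y, f y ≥ f x + ⟪gradient f x, y - x⟫ + l / 2 * ‖y - x‖ ^ 2)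
    (hL : ∀ x y, ‖gradient f x - gradient f y‖ ≤ L * ‖x - y‖) (x y : EuclideanSpace ℝ (Fin d)) :
    l * L * ‖x - y‖ ^ 2 + ‖gradient f x - gradient f y‖ ^ 2
      ≤ (l + L) * ⟪gradient f x - gradient f y, x - y⟫ := by
  have key : ∀ (t : ℝ) (x y : EuclideanSpace ℝ (Fin d)),
      (2 * t - (L - l) * t ^ 2) * ‖gradient f x - gradient f y - l • (x - y)‖ ^ 2
      ≤ 2 * (f x - f y - ⟪gradient f y, x - y⟫ - l / 2 * ‖x - y‖ ^ 2) := by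
    intro t x y
    set D := gradient f x - gradient f y - l • (x - y) with hD
    have h1 := aux_descent f hf L hL x (-(t • D))
    have h2 := hl y (x + -(t • D))
    have h3 : x + -(t • D) - y = (x - y) - t • D := by abel
    have h4 : gradient f x = D + gradient f y + l • (x - y) := by rw [hD]; abel
    rw [h3, norm_sub_sq_real, inner_sub_right] at h2
    rw [h4] at h1
    simp only [inner_add_left, inner_neg_right, inner_smul_right, inner_smul_left, norm_neg,
      norm_smul, real_inner_self_eq_norm_sq, mul_pow, Real.norm_eq_abs, sq_abs] at h1 h2
    simp [-inner_gradient_left] at h1 h2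
    nlinarith
  set a := x - y with ha
  set g := gradient f x - gradient f y with hg
  have hna : ‖g - l • a‖ ^ 2 = ‖g‖ ^ 2 - 2 * l * ⟪g, a⟫ + l ^ 2 * ‖a‖ ^ 2 := by
    rw [norm_sub_sq_real, inner_smul_right, norm_smul, mul_pow, Real.norm_eq_abs, sq_abs]; ring
  have hsum : ∀ t : ℝ, (2 * t - (L - l) * t ^ 2) * ‖g - l • a‖ ^ 2
      ≤ ⟪g, a⟫ - l * ‖a‖ ^ 2 := by
    intro t
    have h1 := key t x y
    have h2 := key t y x
    have e1 : gradient f y - gradient f x - l • (y - x) = -(g - l • a) := by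
      rw [hg, ha, smul_sub, smul_sub]; abel
    have e2 : y - x = -a := by rw [ha]; abel
    rw [e1, e2, norm_neg, norm_neg, inner_neg_right] at h2
    rw [← ha, ← hg] at h1
    have e3 : ⟪g, a⟫ = ⟪gradient f x, a⟫ - ⟪gradient f y, a⟫ := by rw [hg, inner_sub_left]
    linarith
  rcases eq_or_lt_of_le hlL with h | h
  · have h0 := hsum 0
    have h1 := hL x y
    rw [← ha, ← hg] at h1
    have h2 : ‖g‖ ^ 2 ≤ L ^ 2 * ‖a‖ ^ 2 := by
      rw [← mul_pow]; exact pow_le_pow_left₀ (norm_nonneg _) h1 2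
    by_cases hl0 : 0 ≤ l
    · subst h; nlinarith
    · have : ‖a‖ = 0 := by
        have := norm_nonneg a; have := norm_nonneg g; nlinarith
      have ha0 : a = 0 := norm_eq_zero.1 this
      rw [this] at h2
      rw [ha0]
      simp [-inner_gradient_left]
      have := norm_nonneg g
      have h3 : ‖g‖ = 0 := by nlinarith
      exact norm_eq_zero.1 h3
  · have h1 := hsum (1 / (L - l))
    have hp : 0 < L - l := by linarith
    have e : 2 * (1 / (L - l)) - (L - l) * (1 / (L - l)) ^ 2 = (L - l)⁻¹ := by
      field_simp; ring
    rw [e, inv_mul_le_iff₀ hp, hna] at h1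
    nlinarith

lemma aux_prox (f : EuclideanSpace ℝ (Fin d) → ℝ) (hf : Differentiable ℝ f) (s : ℝ) (hs : 0 < s) (w p : EuclideanSpace ℝ (Fin d))
    (hp : ∀ u, f p + (2 * s)⁻¹ * ‖w - p‖ ^ 2 ≤ f u + (2 * s)⁻¹ * ‖w - u‖ ^ 2) :
    w = p + s • gradient f p := by
  have h1 := (hf p).hasGradientAt.hasFDerivAt
  have h2 := (((hasFDerivAt_id (𝕜 := ℝ) p).const_sub w).norm_sq).const_mul (2 * s)⁻¹
  have hmin : IsLocalMin (fun u => f u + (2 * s)⁻¹ * ‖w - u‖ ^ 2) p :=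
    Filter.Eventually.of_forall hp
  have h3 := hmin.hasFDerivAt_eq_zero (h1.add h2)
  set e := w - p - s • gradient f p with he
  have h4 := congrArg (fun A : EuclideanSpace ℝ (Fin d) →L[ℝ] ℝ => A e) h3
  simp [-inner_gradient_left] at h4
  have h5 : ⟪e, e⟫ = 0 := by
    have h6 : ⟪e, e⟫ = ⟪w - p - s • gradient f p, e⟫ := by rw [← he]
    rw [h6, inner_sub_left, inner_sub_left, real_inner_smul_left]
    rw [inner_gradient_left]
    field_simp at h4
    linarith
  rw [inner_self_eq_zero] at h5
  rw [h5] at he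
  have := sub_eq_zero.1 he.symm
  rw [← this]; abel

lemma aux_reflect (f : EuclideanSpace ℝ (Fin d) → ℝ) (hf : Differentiable ℝ f) (l L : ℝ) (hl0 : 0 < l) (hlL : l ≤ L)
    (hl : ∀ x y, f y ≥ f x + ⟪gradient f x, y - x⟫ + l / 2 * ‖y - x‖ ^ 2)
    (hL : ∀ x y, ‖gradient f x - gradient f y‖ ≤ L * ‖x - y‖)
    (s : ℝ) (hs : s = 1 / Real.sqrt (l * L))
    (rho : ℝ) (hrho : rho = 1 - 2 / (Real.sqrt (L / l) + 1)) (p : EuclideanSpace ℝ (Fin d) → EuclideanSpace ℝ (Fin d))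
    (hp : ∀ w u, f (p w) + (2 * s)⁻¹ * ‖w - p w‖ ^ 2 ≤ f u + (2 * s)⁻¹ * ‖w - u‖ ^ 2) (v w : EuclideanSpace ℝ (Fin d)) :
    ‖((2 : ℝ) • p v - v) - ((2 : ℝ) • p w - w)‖ ^ 2 ≤ rho ^ 2 * ‖v - w‖ ^ 2 := by
  have hL0 : 0 < L := hl0.trans_le hlL
  have hs0 : 0 < s := by rw [hs]; positivity
  have hv := aux_prox f hf s hs0 v (p v) (hp v)
  have hw := aux_prox f hf s hs0 w (p w) (hp w)
  have hc := aux_coco f hf l L hlL hl hL (p v) (p w)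
  set a := p v - p w with ha
  set g := gradient f (p v) - gradient f (p w) with hg
  have e1 : v - w = a + s • g := by
    rw [ha, hg, smul_sub]
    nth_rw 1 [hv, hw]
    abel
  have e2 : ((2 : ℝ) • p v - v) - ((2 : ℝ) • p w - w) = a - s • g := by
    have : ((2 : ℝ) • p v - v) - ((2 : ℝ) • p w - w) = (2 : ℝ) • a - (v - w) := by
      rw [ha, smul_sub]; abel
    rw [this, e1, two_smul]; abel
  rw [e2, e1, norm_sub_sq_real, norm_add_sq_real, inner_smul_right, norm_smul, mul_pow,
    Real.norm_eq_abs, sq_abs]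
  rw [real_inner_comm] at hc
  generalize ⟪a, g⟫ = c at *
  generalize ‖a‖ ^ 2 = A at *
  generalize ‖g‖ ^ 2 = G at *
  obtain ⟨x, hx0, hx⟩ : ∃ x, 0 < x ∧ l = x ^ 2 :=
    ⟨Real.sqrt l, Real.sqrt_pos.2 hl0, (Real.sq_sqrt hl0.le).symm⟩
  obtain ⟨y, hy0, hy⟩ : ∃ x, 0 < x ∧ L = x ^ 2 :=
    ⟨Real.sqrt L, Real.sqrt_pos.2 hL0, (Real.sq_sqrt hL0.le).symm⟩
  have hs' : s = 1 / (x * y) := by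
    rw [hs, hx, hy, ← mul_pow, Real.sqrt_sq (by positivity)]
  have hr' : rho = (y - x) / (y + x) := by
    rw [hrho, hx, hy, ← div_pow, Real.sqrt_sq (by positivity)]
    field_simp
    ring
  rw [hr', hs']
  rw [hx, hy] at hc
  have : ((y - x) / (y + x)) ^ 2 * (A + 2 * (1 / (x * y) * c) + (1 / (x * y)) ^ 2 * G)
      - (A - 2 * (1 / (x * y) * c) + (1 / (x * y)) ^ 2 * G)
      = 4 / (x * y * (y + x) ^ 2) * ((x ^ 2 + y ^ 2) * c - (x ^ 2 * y ^ 2 * A + G)) := by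
    field_simp
    ring
  have h2 : 0 ≤ 4 / (x * y * (y + x) ^ 2) * ((x ^ 2 + y ^ 2) * c - (x ^ 2 * y ^ 2 * A + G)) :=
    mul_nonneg (by positivity) (by linarith)
  linarith

lemma aux_isometry {m : ℕ} (hm : 0 < m) (a : Fin m → EuclideanSpace ℝ (Fin d)) :
    ∑ j, ‖(2 : ℝ) • ((m : ℝ)⁻¹ • ∑ k, a k) - a j‖ ^ 2 = ∑ j, ‖a j‖ ^ 2 := by
  have hm' : (m : ℝ) ≠ 0 := by positivity
  set b := (m : ℝ)⁻¹ • ∑ k, a k with hb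
  have hsum : ∑ k, a k = (m : ℝ) • b := by rw [hb, smul_inv_smul₀ hm']
  have : ∀ j, ‖(2 : ℝ) • b - a j‖ ^ 2 = 4 * ‖b‖ ^ 2 - 4 * ⟪b, a j⟫ + ‖a j‖ ^ 2 := by
    intro j
    rw [norm_sub_sq_real, norm_smul, inner_smul_left, mul_pow]
    simp
    ring
  simp_rw [this]
  rw [Finset.sum_add_distrib, Finset.sum_sub_distrib, ← Finset.mul_sum, ← Finset.mul_sum, ← inner_sum, hsum,
    inner_smul_right, real_inner_self_eq_norm_sq]
  simp

end helpers

/-- FedSplit convergence with general per-round residuals (Theorem 3 of Pathak–Wainwright):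
with `l* = min_j l_j`, `L* = max_j L_j`, `κ = L*/l*` and stepsize `s = 1/√(l* L*)`, the exact
FedSplit iteration has a unique fixed point `z*`, and the inexact iterates satisfy
`‖z^{(t+1)} - z*‖ ≤ ρ^t ‖z^{(1)} - z*‖ + 2 ∑_{j=1}^t ρ^{t-j} ‖r^{(j)}‖` for `t ≥ 1`,
where `ρ = 1 - 2/(√κ+1)` and `r^{(t)}` is the blockwise proximal-evaluation residual. -/
theorem fedsplit_convergence_general_residuals
    {d m : ℕ} (hm : 0 < m)
    (f : Fin m → EuclideanSpace ℝ (Fin d) → ℝ)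
    (hdiff : ∀ j, Differentiable ℝ (f j))
    (l L : Fin m → ℝ) (hl : ∀ j, 0 < l j)
    (hstrong : ∀ j x y, f j y ≥ f j x + ⟪gradient (f j) x, y - x⟫ + l j / 2 * ‖y - x‖ ^ 2)
    (hsmooth : ∀ j x y, ‖gradient (f j) x - gradient (f j) y‖ ≤ L j * ‖x - y‖)
    (lstar Lstar : ℝ)
    (hlstar : IsLeast (Set.range l) lstar)
    (hLstar : IsGreatest (Set.range L) Lstar)
    (kappa : ℝ) (hkappa : kappa = Lstar / lstar)
    (rho : ℝ) (hrho : rho = 1 - 2 / (Real.sqrt kappa + 1))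
    (s : ℝ) (hs : s = 1 / Real.sqrt (lstar * Lstar))
    (prox : Fin m → EuclideanSpace ℝ (Fin d) → EuclideanSpace ℝ (Fin d))
    (hprox : ∀ j w u, f j (prox j w) + (2 * s)⁻¹ * ‖w - prox j w‖ ^ 2
        ≤ f j u + (2 * s)⁻¹ * ‖w - u‖ ^ 2)
    (proxU : Fin m → EuclideanSpace ℝ (Fin d) → EuclideanSpace ℝ (Fin d))
    -- FedSplit iterates with approximate proximal solvers, indexed from t = 1;
    -- the server variable equals the block average x^{(t)} = z̄^{(t)}
    (z : ℕ → PiLp 2 (fun _ : Fin m => EuclideanSpace ℝ (Fin d)))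
    (hupdate : ∀ t, 1 ≤ t → ∀ j,
      z (t + 1) j = z t j + (2 : ℝ) •
        (proxU j ((2 : ℝ) • ((m : ℝ)⁻¹ • ∑ k, z t k) - z t j)
          - (m : ℝ)⁻¹ • ∑ k, z t k))
    -- the per-round residuals
    (r : ℕ → PiLp 2 (fun _ : Fin m => EuclideanSpace ℝ (Fin d)))
    (hr : ∀ t, 1 ≤ t → ∀ j,
      r t j = proxU j ((2 : ℝ) • ((m : ℝ)⁻¹ • ∑ k, z t k) - z t j)
        - prox j ((2 : ℝ) • ((m : ℝ)⁻¹ • ∑ k, z t k) - z t j)) :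
    ∃ zstar : PiLp 2 (fun _ : Fin m => EuclideanSpace ℝ (Fin d)),
      (∀ j, zstar j = zstar j + (2 : ℝ) •
        (prox j ((2 : ℝ) • ((m : ℝ)⁻¹ • ∑ k, zstar k) - zstar j)
          - (m : ℝ)⁻¹ • ∑ k, zstar k)) ∧
      (∀ w : PiLp 2 (fun _ : Fin m => EuclideanSpace ℝ (Fin d)),
        (∀ j, w j = w j + (2 : ℝ) •
          (prox j ((2 : ℝ) • ((m : ℝ)⁻¹ • ∑ k, w k) - w j)
            - (m : ℝ)⁻¹ • ∑ k, w k)) → w = zstar) ∧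
      (∀ t : ℕ, 1 ≤ t →
        ‖z (t + 1) - zstar‖
          ≤ rho ^ t * ‖z 1 - zstar‖ + 2 * ∑ i ∈ Finset.Icc 1 t, rho ^ (t - i) * ‖r i‖) := by
  by_cases hd : d = 0
  · subst hd
    have hE : ∀ x y : EuclideanSpace ℝ (Fin 0), x = y := fun x y => Subsingleton.elim x y
    have hP : ∀ x y : PiLp 2 (fun _ : Fin m => EuclideanSpace ℝ (Fin 0)), x = y := by
      intro x y
      ext j i
      exact i.elim0
    refine ⟨0, fun j => hE _ _, fun w _ => hP _ _, ?_⟩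
    intro t _
    have hn : ∀ x : PiLp 2 (fun _ : Fin m => EuclideanSpace ℝ (Fin 0)), ‖x‖ = 0 := by
      intro x; rw [hP x 0, norm_zero]
    simp only [hn]
    simp
  obtain ⟨⟨j0, hj0⟩, hlmin⟩ := hlstar
  have hlj : ∀ j, lstar ≤ l j := fun j => hlmin ⟨j, rfl⟩
  have hLj : ∀ j, L j ≤ Lstar := fun j => hLstar.2 ⟨j, rfl⟩
  have hl0 : 0 < lstar := hj0 ▸ hl j0
  have hst : ∀ j x y, f j y ≥ f j x + ⟪gradient (f j) x, y - x⟫ + lstar / 2 * ‖y - x‖ ^ 2 := by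
    intro j x y
    have h1 := hstrong j x y
    have h2 := mul_le_mul_of_nonneg_right (hlj j) (sq_nonneg ‖y - x‖)
    linarith
  have hsm : ∀ j x y, ‖gradient (f j) x - gradient (f j) y‖ ≤ Lstar * ‖x - y‖ := by
    intro j x y
    exact (hsmooth j x y).trans (mul_le_mul_of_nonneg_right (hLj j) (norm_nonneg _))
  have hlL : lstar ≤ Lstar := by
    let e : EuclideanSpace ℝ (Fin d) := EuclideanSpace.single ⟨0, Nat.pos_of_ne_zero hd⟩ 1
    have he : ‖e‖ = 1 := by simp [e]
    have h1 := hst j0 e 0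
    have h2 := hst j0 0 e
    have h3 := hsm j0 e 0
    have h4 := real_inner_le_norm (gradient (f j0) e - gradient (f j0) 0) e
    rw [inner_sub_left] at h4
    simp only [zero_sub, sub_zero, norm_neg, he, inner_neg_right] at h1 h2 h3 h4
    linarith
  have hL0 : 0 < Lstar := hl0.trans_le hlL
  subst hkappa
  have hk1 : 1 ≤ Real.sqrt (Lstar / lstar) := by
    rw [Real.one_le_sqrt, one_le_div hl0]; exact hlL
  have hrho0 : 0 ≤ rho := by
    rw [hrho, sub_nonneg, div_le_one (by linarith)]; linarith
  have hrho1 : rho < 1 := by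
    rw [hrho]
    have : 0 < 2 / (Real.sqrt (Lstar / lstar) + 1) := by positivity
    linarith
  have hrefl := fun j => aux_reflect (f j) (hdiff j) lstar Lstar hl0 hlL (hst j) (hsm j) s hs
    rho hrho (prox j) (hprox j)
  -- the exact operator
  let T : PiLp 2 (fun _ : Fin m => EuclideanSpace ℝ (Fin d)) →
      PiLp 2 (fun _ : Fin m => EuclideanSpace ℝ (Fin d)) := fun w =>
    WithLp.toLp 2 (fun j => w j + (2 : ℝ) •
        (prox j ((2 : ℝ) • ((m : ℝ)⁻¹ • ∑ k, w k) - w j) - (m : ℝ)⁻¹ • ∑ k, w k))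
  have hTapp : ∀ w j, T w j = w j + (2 : ℝ) •
        (prox j ((2 : ℝ) • ((m : ℝ)⁻¹ • ∑ k, w k) - w j) - (m : ℝ)⁻¹ • ∑ k, w k) :=
    fun w j => rfl
  have hT : ∀ v w, ‖T v - T w‖ ≤ rho * ‖v - w‖ := by
    intro v w
    refine (sq_le_sq₀ (norm_nonneg _) (by positivity)).1 ?_
    rw [mul_pow, PiLp.norm_sq_eq_of_L2, PiLp.norm_sq_eq_of_L2]
    have hiso := aux_isometry hm (fun j => (v - w) j)
    rw [← hiso, Finset.mul_sum]
    apply Finset.sum_le_sum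
    intro j _
    have h := hrefl j ((2 : ℝ) • ((m : ℝ)⁻¹ • ∑ k, v k) - v j)
      ((2 : ℝ) • ((m : ℝ)⁻¹ • ∑ k, w k) - w j)
    have e1 : (T v - T w) j =
        ((2 : ℝ) • prox j ((2 : ℝ) • ((m : ℝ)⁻¹ • ∑ k, v k) - v j)
            - ((2 : ℝ) • ((m : ℝ)⁻¹ • ∑ k, v k) - v j))
        - ((2 : ℝ) • prox j ((2 : ℝ) • ((m : ℝ)⁻¹ • ∑ k, w k) - w j)
            - ((2 : ℝ) • ((m : ℝ)⁻¹ • ∑ k, w k) - w j)) := by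
      rw [PiLp.sub_apply, hTapp, hTapp]
      simp only [smul_sub]
      abel
    have e2 : (2 : ℝ) • ((m : ℝ)⁻¹ • ∑ k, (v - w) k) - (v - w) j =
        ((2 : ℝ) • ((m : ℝ)⁻¹ • ∑ k, v k) - v j)
        - ((2 : ℝ) • ((m : ℝ)⁻¹ • ∑ k, w k) - w j) := by
      simp only [PiLp.sub_apply, Finset.sum_sub_distrib, smul_sub]
      abel
    rw [e1, e2]
    exact h
  have hcontr : ContractingWith ⟨rho, hrho0⟩ T := by
    refine ⟨by exact_mod_cast hrho1, LipschitzWith.of_dist_le_mul ?_⟩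
    intro v w
    rw [dist_eq_norm, dist_eq_norm]
    exact hT v w
  have hfix := hcontr.fixedPoint_isFixedPt
  refine ⟨ContractingWith.fixedPoint T hcontr, ?_, ?_, ?_⟩
  · intro j
    rw [← hTapp, hfix]
  · intro w hw
    apply hcontr.fixedPoint_unique
    ext1 j
    rw [hTapp]
    exact (hw j).symm
  · generalize ContractingWith.fixedPoint T hcontr = zs at *
    have hstep : ∀ t, 1 ≤ t → ‖z (t + 1) - zs‖ ≤ rho * ‖z t - zs‖ + 2 * ‖r t‖ := by
      intro t ht
      have e : z (t + 1) - zs = (T (z t) - T zs) + (2 : ℝ) • r t := by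
        rw [hfix]
        ext1 j
        rw [PiLp.sub_apply, PiLp.add_apply, PiLp.sub_apply, PiLp.smul_apply, hTapp,
          hupdate t ht j, hr t ht j]
        simp only [smul_sub]
        abel
      rw [e]
      refine (norm_add_le _ _).trans ?_
      rw [norm_smul]
      have := hT (z t) zs
      simp
      linarith
    intro t ht
    induction t, ht using Nat.le_induction with
    | base => simpa using hstep 1 le_rfl
    | succ n hn ih =>
      refine (hstep (n + 1) (by omega)).trans ?_
      rw [Finset.sum_Icc_succ_top (by omega)]
      have e : ∑ i ∈ Finset.Icc 1 n, rho ^ (n + 1 - i) * ‖r i‖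
          = rho * ∑ i ∈ Finset.Icc 1 n, rho ^ (n - i) * ‖r i‖ := by
        rw [Finset.mul_sum]
        apply Finset.sum_congr rfl
        intro i hi
        rw [Finset.mem_Icc] at hi
        rw [show n + 1 - i = (n - i) + 1 by omega, pow_succ]
        ring
      rw [e, Nat.sub_self, pow_zero, one_mul, pow_succ]
      have := mul_le_mul_of_nonneg_left ih hrho0
      linarith
end

section
/- FedGD limit for least squares: Let f_j(x) = (1/2)||A_j x - b_j||^2 with each A_j in R^{n_j x d} of full column rank, and consider FedGD with stepsize s > 0 and e >= 1 local epochs. If the matrix sum_{j=1}^m A_j^T A_j * ( sum_{k=0}^{e-1} (I - s*A_j^T A_j)^k ) is invertible and the FedGD iterates converge, then their common limit is x*_FedGD = ( sum_{j=1}^m A_j^T A_j ( sum_{k=0}^{e-1} (I - s*A_j^T A_j)^k ) )^{-1} * ( sum_{j=1}^m ( sum_{k=0}^{e-1} (I - s*A_j^T A_j)^k ) A_j^T b_j ). -/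
open Matrix Finset Filter

lemma fedgd_iter {d : ℕ} (H : Matrix (Fin d) (Fin d) ℝ) (c : Fin d → ℝ) (s : ℝ)
    (g : (Fin d → ℝ) → (Fin d → ℝ)) (hg : ∀ x, g x = x - s • (H *ᵥ x - c))
    (y : Fin d → ℝ) (e : ℕ) :
    g^[e] y = y - s • ((∑ k ∈ Finset.range e, (1 - s • H) ^ k) *ᵥ (H *ᵥ y - c)) := by
  induction e with
  | zero => simp
  | succ k ih =>
    rw [Function.iterate_succ_apply', ih, hg, geom_sum_succ]
    generalize (∑ k ∈ Finset.range k, (1 - s • H) ^ k) = S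
    generalize hr : H *ᵥ y - c = r
    have hr' : H *ᵥ y = r + c := by rw [← hr]; abel
    rw [Matrix.mulVec_sub, hr', Matrix.mulVec_smul, Matrix.add_mulVec, ← Matrix.mulVec_mulVec,
      Matrix.sub_mulVec, Matrix.smul_mulVec, Matrix.one_mulVec, Matrix.one_mulVec]
    module

/-- FedGD limit for least squares: for `f_j(x) = ½‖A_j x - b_j‖²` with full-column-rank
design matrices, if the matrix `∑_j A_jᵀA_j (∑_{k=0}^{e-1} (I - s A_jᵀA_j)^k)` is invertible
and the FedGD iterates converge, then their common limit is
`x*_FedGD = (∑_j A_jᵀA_j ∑_{k<e} (I - s A_jᵀA_j)^k)⁻¹ (∑_j (∑_{k<e} (I - s A_jᵀA_j)^k) A_jᵀ b_j)`. -/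
theorem fedgd_least_squares_limit
    {d m : ℕ} (hm : 0 < m)
    (n : Fin m → ℕ)
    (A : ∀ j, Matrix (Fin (n j)) (Fin d) ℝ)
    (b : ∀ j, Fin (n j) → ℝ)
    (hrank : ∀ j, Function.Injective ((A j).mulVec))
    (s : ℝ) (hs : 0 < s)
    (e : ℕ) (he : 1 ≤ e)
    (G : Fin m → (Fin d → ℝ) → (Fin d → ℝ))
    (hG : ∀ j x, G j x = x - s • ((A j)ᵀ.mulVec ((A j).mulVec x - b j)))
    (x : ℕ → Fin m → Fin d → ℝ)
    (hupdate : ∀ t j, x (t + 1) j = (m : ℝ)⁻¹ • ∑ k, (G k)^[e] (x t k))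
    (xlim : Fin m → Fin d → ℝ)
    (hconv : ∀ j, Tendsto (fun t => x t j) atTop (nhds (xlim j)))
    (M : Matrix (Fin d) (Fin d) ℝ)
    (hMdef : M = ∑ j, ((A j)ᵀ * A j) *
      ∑ k ∈ Finset.range e, ((1 : Matrix (Fin d) (Fin d) ℝ) - s • ((A j)ᵀ * A j)) ^ k)
    (hMinv : IsUnit M) :
    ∀ j, xlim j = M⁻¹.mulVec (∑ j,
      (∑ k ∈ Finset.range e, ((1 : Matrix (Fin d) (Fin d) ℝ) - s • ((A j)ᵀ * A j)) ^ k).mulVec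
        ((A j)ᵀ.mulVec (b j))) := by
  have hGe : ∀ k y, (G k)^[e] y = y - s • ((∑ i ∈ Finset.range e,
      (1 - s • ((A k)ᵀ * A k)) ^ i) *ᵥ (((A k)ᵀ * A k) *ᵥ y - (A k)ᵀ *ᵥ b k)) := by
    intro k y
    apply fedgd_iter
    intro z
    rw [hG, Matrix.mulVec_sub, Matrix.mulVec_mulVec]
  have hcont : ∀ k, Continuous ((G k)^[e]) := by
    intro k
    apply Continuous.iterate
    have : G k = fun x => x - s • ((A k)ᵀ.mulVec ((A k).mulVec x - b k)) := funext (hG k)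
    rw [this]
    fun_prop
  have hlim : ∀ j, xlim j = (m : ℝ)⁻¹ • ∑ k, (G k)^[e] (xlim k) := by
    intro j
    have h1 := (hconv j).comp (tendsto_add_atTop_nat 1)
    have h2 : Tendsto (fun t => (m : ℝ)⁻¹ • ∑ k, (G k)^[e] (x t k)) atTop
        (nhds ((m : ℝ)⁻¹ • ∑ k, (G k)^[e] (xlim k))) :=
      (tendsto_finsetSum _ fun k _ => ((hcont k).tendsto _).comp (hconv k)).const_smul _
    refine tendsto_nhds_unique h1 (h2.congr fun t => ?_)
    exact (hupdate t j).symm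
  intro j
  have heq : ∀ k, xlim k = xlim j := fun k => by rw [hlim k, ← hlim j]
  have hy := hlim j
  simp only [heq, hGe] at hy
  generalize xlim j = y at hy
  have hm0 : (m : ℝ) ≠ 0 := by positivity
  rw [Finset.sum_sub_distrib, ← Finset.smul_sum, Finset.sum_const, Finset.card_univ,
    Fintype.card_fin, ← Nat.cast_smul_eq_nsmul ℝ, smul_sub, inv_smul_smul₀ hm0,
    eq_comm, sub_eq_self, smul_eq_zero_iff_right (inv_ne_zero hm0),
    smul_eq_zero_iff_right hs.ne'] at hy
  simp only [Matrix.mulVec_sub] at hy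
  rw [Finset.sum_sub_distrib, sub_eq_zero] at hy
  rw [← hy]
  have hM : (∑ k, (∑ i ∈ Finset.range e, (1 - s • ((A k)ᵀ * A k)) ^ i) *ᵥ
      (((A k)ᵀ * A k) *ᵥ y)) = M *ᵥ y := by
    rw [hMdef, Matrix.sum_mulVec]
    refine Finset.sum_congr rfl fun k _ => ?_
    rw [Matrix.mulVec_mulVec]
    congr 1
    have hc : Commute (∑ i ∈ Finset.range e, (1 - s • ((A k)ᵀ * A k)) ^ i) ((A k)ᵀ * A k) :=
      Commute.sum_left _ _ _ fun i _ => Commute.pow_left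
        ((Commute.one_left _).sub_left ((Commute.refl _).smul_left s)) i
    exact hc.eq
  rw [hM, Matrix.mulVec_mulVec, Matrix.nonsing_inv_mul _ ((Matrix.isUnit_iff_isUnit_det M).mp hMinv),
    Matrix.one_mulVec]
end

section
/- FedProx limit for least squares: Let f_j(x) = (1/2)||A_j x - b_j||^2 with A_j in R^{n_j x d}, b_j in R^{n_j}, and stepsize s > 0. If the matrix sum_{j=1}^m ( I - (I + s*A_j^T A_j)^{-1} ) is invertible and the FedProx iterates converge, then their common limit is x*_FedProx = ( sum_{j=1}^m ( I - (I + s*A_j^T A_j)^{-1} ) )^{-1} * ( sum_{j=1}^m (A_j^T A_j + (1/s)*I)^{-1} A_j^T b_j ). -/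
open Matrix Finset Filter

lemma fed_foc {d n : ℕ} (A : Matrix (Fin n) (Fin d) ℝ) (b : EuclideanSpace ℝ (Fin n))
    (s : ℝ) (hs : 0 < s) (z p : EuclideanSpace ℝ (Fin d))
    (h : ∀ u, (1 / 2) * ‖Matrix.toEuclideanLin A p - b‖ ^ 2 + (2 * s)⁻¹ * ‖z - p‖ ^ 2
        ≤ (1 / 2) * ‖Matrix.toEuclideanLin A u - b‖ ^ 2 + (2 * s)⁻¹ * ‖z - u‖ ^ 2) :
    Matrix.toEuclideanLin Aᵀ (Matrix.toEuclideanLin A p - b) = s⁻¹ • (z - p) := by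
  have hadj : ∀ v w, inner ℝ w (Matrix.toEuclideanLin A v)
      = inner ℝ (Matrix.toEuclideanLin Aᵀ w) v := by
    intro v w
    rw [← Matrix.conjTranspose_eq_transpose_of_trivial,
      Matrix.toEuclideanLin_conjTranspose_eq_adjoint, LinearMap.adjoint_inner_left]
  set q := Matrix.toEuclideanLin Aᵀ (Matrix.toEuclideanLin A p - b) - s⁻¹ • (z - p) with hq
  set C := (1 / 2) * ‖Matrix.toEuclideanLin A q‖ ^ 2 + (2 * s)⁻¹ * ‖q‖ ^ 2 with hC
  have hC0 : 0 ≤ C := by positivity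
  have key : ∀ t : ℝ, 0 ≤ t * ‖q‖ ^ 2 + t ^ 2 * C := by
    intro t
    have h1 := h (p + t • q)
    have e1 : Matrix.toEuclideanLin A (p + t • q) - b
        = (Matrix.toEuclideanLin A p - b) + t • Matrix.toEuclideanLin A q := by
      rw [map_add, map_smul]; abel
    have e2 : z - (p + t • q) = (z - p) - t • q := by abel
    rw [e1, e2, norm_add_sq_real, norm_sub_sq_real (z - p), inner_smul_right, inner_smul_right, hadj,
      norm_smul, norm_smul, mul_pow, mul_pow, Real.norm_eq_abs, sq_abs] at h1
    have e3 : ‖q‖ ^ 2 = inner ℝ (Matrix.toEuclideanLin Aᵀ (Matrix.toEuclideanLin A p - b)) q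
        - s⁻¹ * inner ℝ (z - p) q := by
      rw [← real_inner_self_eq_norm_sq]
      conv_lhs => rw [hq]
      rw [← hq, inner_sub_left, real_inner_smul_left]
    have e4 : (2 * s)⁻¹ = s⁻¹ / 2 := by rw [mul_inv]; ring
    have e5 : t * ‖q‖ ^ 2 = t * (inner ℝ (Matrix.toEuclideanLin Aᵀ
        (Matrix.toEuclideanLin A p - b)) q - s⁻¹ * inner ℝ (z - p) q) := by rw [← e3]
    rw [e5, hC]
    rw [e4] at h1 ⊢
    linarith
  have hq0 : ‖q‖ ^ 2 = 0 := by
    by_contra hne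
    have hpos : 0 < ‖q‖ ^ 2 := lt_of_le_of_ne (by positivity) (Ne.symm hne)
    have := key (-(‖q‖ ^ 2 / (2 * (C + 1))))
    set r := ‖q‖ ^ 2 / (2 * (C + 1)) with hr
    have hr0 : 0 < r := by positivity
    have hre : r * (2 * (C + 1)) = ‖q‖ ^ 2 := by rw [hr]; field_simp
    rw [← hre] at this
    nlinarith [mul_pos hr0 hr0, mul_nonneg (mul_pos hr0 hr0).le hC0]
  have : q = 0 := by simpa using hq0
  exact sub_eq_zero.mp this

lemma fed_unit {d n : ℕ} (A : Matrix (Fin n) (Fin d) ℝ) (s : ℝ) (hs : 0 < s) :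
    IsUnit ((1 : Matrix (Fin d) (Fin d) ℝ) + s • (Aᵀ * A)) := by
  apply Matrix.PosDef.isUnit
  apply Matrix.PosDef.add_posSemidef Matrix.PosDef.one
  have := Matrix.posSemidef_conjTranspose_mul_self A
  rw [Matrix.conjTranspose_eq_transpose_of_trivial] at this
  exact this.smul hs.le

lemma fed_prox {d n : ℕ} (A : Matrix (Fin n) (Fin d) ℝ) (b : EuclideanSpace ℝ (Fin n))
    (s : ℝ) (hs : 0 < s) (z p : EuclideanSpace ℝ (Fin d))
    (h : ∀ u, (1 / 2) * ‖Matrix.toEuclideanLin A p - b‖ ^ 2 + (2 * s)⁻¹ * ‖z - p‖ ^ 2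
        ≤ (1 / 2) * ‖Matrix.toEuclideanLin A u - b‖ ^ 2 + (2 * s)⁻¹ * ‖z - u‖ ^ 2) :
    p = Matrix.toEuclideanLin ((1 : Matrix (Fin d) (Fin d) ℝ) + s • (Aᵀ * A))⁻¹ z
      + Matrix.toEuclideanLin ((Aᵀ * A + s⁻¹ • (1 : Matrix (Fin d) (Fin d) ℝ))⁻¹)
        (Matrix.toEuclideanLin Aᵀ b) := by
  have hfoc := fed_foc A b s hs z p h
  have hU := fed_unit A s hs
  have hdet := (Matrix.isUnit_iff_isUnit_det _).1 hU
  have hinv : (Aᵀ * A + s⁻¹ • (1 : Matrix (Fin d) (Fin d) ℝ))⁻¹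
      = s • ((1 : Matrix (Fin d) (Fin d) ℝ) + s • (Aᵀ * A))⁻¹ := by
    apply Matrix.inv_eq_right_inv
    have : Aᵀ * A + s⁻¹ • (1 : Matrix (Fin d) (Fin d) ℝ)
        = s⁻¹ • ((1 : Matrix (Fin d) (Fin d) ℝ) + s • (Aᵀ * A)) := by
      rw [smul_add, smul_smul, inv_mul_cancel₀ hs.ne', one_smul, add_comm]
    rw [this, Matrix.smul_mul, Matrix.mul_smul, smul_smul, inv_mul_cancel₀ hs.ne', one_smul,
      Matrix.mul_nonsing_inv _ hdet]
  rw [hinv, map_smul, LinearMap.smul_apply, ← map_smul, ← map_add]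
  have hz : z + s • Matrix.toEuclideanLin Aᵀ b
      = Matrix.toEuclideanLin ((1 : Matrix (Fin d) (Fin d) ℝ) + s • (Aᵀ * A)) p := by
    have h2 : s • Matrix.toEuclideanLin Aᵀ (Matrix.toEuclideanLin A p - b) = z - p := by
      rw [hfoc, smul_smul, mul_inv_cancel₀ hs.ne', one_smul]
    have h3 : Matrix.toEuclideanLin ((1 : Matrix (Fin d) (Fin d) ℝ) + s • (Aᵀ * A)) p
        = p + s • Matrix.toEuclideanLin Aᵀ (Matrix.toEuclideanLin A p) := by
      ext i
      simp [Matrix.toLpLin_apply, Matrix.add_mulVec, Matrix.smul_mulVec, Matrix.mulVec_mulVec]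
    rw [h3, sub_eq_iff_eq_add.1 h2.symm, map_sub, smul_sub]
    abel
  rw [hz, ← LinearMap.comp_apply, ← Matrix.toLpLin_mul_same, Matrix.nonsing_inv_mul _ hdet,
    Matrix.toLpLin_one, LinearMap.id_apply]

/-- FedProx limit for least squares: for `f_j(x) = ½‖A_j x - b_j‖²` and stepsize `s > 0`, if
`∑_j (I - (I + s A_jᵀA_j)⁻¹)` is invertible and the FedProx iterates converge, then their
common limit is
`x*_FedProx = (∑_j (I - (I + s A_jᵀA_j)⁻¹))⁻¹ (∑_j (A_jᵀA_j + (1/s) I)⁻¹ A_jᵀ b_j)`. -/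
theorem fedprox_least_squares_limit
    {d m : ℕ} (hm : 0 < m)
    (n : Fin m → ℕ)
    (A : ∀ j, Matrix (Fin (n j)) (Fin d) ℝ)
    (b : ∀ j, EuclideanSpace ℝ (Fin (n j)))
    (s : ℝ) (hs : 0 < s)
    (f : Fin m → EuclideanSpace ℝ (Fin d) → ℝ)
    (hf : ∀ j x, f j x = (1 / 2) * ‖Matrix.toEuclideanLin (A j) x - b j‖ ^ 2)
    (prox : Fin m → EuclideanSpace ℝ (Fin d) → EuclideanSpace ℝ (Fin d))
    (hprox : ∀ j z u, f j (prox j z) + (2 * s)⁻¹ * ‖z - prox j z‖ ^ 2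
        ≤ f j u + (2 * s)⁻¹ * ‖z - u‖ ^ 2)
    (x : ℕ → Fin m → EuclideanSpace ℝ (Fin d))
    (hupdate : ∀ t j, x (t + 1) j = (m : ℝ)⁻¹ • ∑ k, prox k (x t k))
    (xlim : Fin m → EuclideanSpace ℝ (Fin d))
    (hconv : ∀ j, Tendsto (fun t => x t j) atTop (nhds (xlim j)))
    (S : Matrix (Fin d) (Fin d) ℝ)
    (hS : S = ∑ j, ((1 : Matrix (Fin d) (Fin d) ℝ)
      - ((1 : Matrix (Fin d) (Fin d) ℝ) + s • ((A j)ᵀ * A j))⁻¹))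
    (hSinv : IsUnit S) :
    ∀ j, xlim j = Matrix.toEuclideanLin S⁻¹
      (∑ k, Matrix.toEuclideanLin (((A k)ᵀ * A k + s⁻¹ • (1 : Matrix (Fin d) (Fin d) ℝ))⁻¹)
        (Matrix.toEuclideanLin (A k)ᵀ (b k))) := by
  have hp : ∀ k z, prox k z = _ := fun k z =>
    fed_prox (A k) (b k) s hs z (prox k z) (fun u => by
      have := hprox k z u
      rwa [hf, hf] at this)
  set c : Fin m → EuclideanSpace ℝ (Fin d) := fun k =>
    Matrix.toEuclideanLin (((A k)ᵀ * A k + s⁻¹ • (1 : Matrix (Fin d) (Fin d) ℝ))⁻¹)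
        (Matrix.toEuclideanLin (A k)ᵀ (b k)) with hc
  set N : Fin m → Matrix (Fin d) (Fin d) ℝ := fun k => (1 + s • ((A k)ᵀ * A k))⁻¹ with hN
  have hp' : ∀ k z, prox k z = Matrix.toEuclideanLin (N k) z + c k := hp
  have hlim : ∀ j, xlim j
      = (m : ℝ)⁻¹ • ∑ k, (Matrix.toEuclideanLin (N k) (xlim k) + c k) := by
    intro j
    refine tendsto_nhds_unique ((tendsto_add_atTop_iff_nat 1).2 (hconv j)) ?_
    simp only [hupdate, hp']
    refine Tendsto.const_smul (tendsto_finsetSum _ fun k _ => ?_) _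
    refine Tendsto.add_const _ ?_
    exact ((LinearMap.continuous_of_finiteDimensional
      (Matrix.toEuclideanLin (N k))).tendsto _).comp (hconv k)
  intro j
  have hall : ∀ k, xlim k = xlim j := fun k => (hlim k).trans (hlim j).symm
  have hj := hlim j
  simp only [hall] at hj
  have hm' : (m : ℝ) ≠ 0 := by exact_mod_cast hm.ne'
  have hj2 : (m : ℝ) • xlim j = ∑ k, (Matrix.toEuclideanLin (N k) (xlim j) + c k) := by
    conv_lhs => rw [hj]
    rw [smul_smul, mul_inv_cancel₀ hm', one_smul]
  have hdet := (Matrix.isUnit_iff_isUnit_det _).1 hSinv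
  have h1 : Matrix.toEuclideanLin (1 : Matrix (Fin d) (Fin d) ℝ) (xlim j) = xlim j := by
    ext i
    simp [Matrix.toLpLin_apply]
  have hSx : Matrix.toEuclideanLin S (xlim j) = ∑ k, c k := by
    rw [hS, map_sum, LinearMap.sum_apply]
    simp only [map_sub, LinearMap.sub_apply, h1]
    rw [Finset.sum_sub_distrib, Finset.sum_const, Finset.card_univ, Fintype.card_fin,
      ← Nat.cast_smul_eq_nsmul ℝ, hj2, Finset.sum_add_distrib]
    exact add_sub_cancel_left _ _
  rw [← hSx]
  ext i
  simp [Matrix.toLpLin_apply, Matrix.mulVec_mulVec, Matrix.nonsing_inv_mul _ hdet]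
end
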